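/- arXiv:1806.03523 — 2 statements merged into one kernel-verified Lean document; each statement's English description precedes it below -/
import Mathlib

section
/- Let a be an ideal linked over M and t = grade_M(a). Then √(a + Ann_R M) = ⋂_{p ∈ Ass_R H^t_a(M)} p. -/
universe u

open RingTheory.Sequence CategoryTheory

noncomputable section

/-- `N :_M a`, set of `m : M` with `a • m ⊆ N`. -/
def Submodule.modColon {R : Type u} [CommRing R] {M : Type u} [AddCommGroup M] [Module R M]
    (N : Submodule R M) (a : Ideal R) : Submodule R M :=
  ⨅ r ∈ a, N.comap (LinearMap.lsmul R M r)

/-- The ideals `a` and `b` are linked by `I` over `M`: `I ⊆ a ⊓ b` is generated by an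
`M`-regular sequence, `bM = IM :_M a`, `aM = IM :_M b`, and `aM ≠ M ≠ bM`. -/
def Ideal.IsLinkedBy {R : Type u} [CommRing R] (M : Type u) [AddCommGroup M] [Module R M]
    (I a b : Ideal R) : Prop :=
  (∃ rs : List R, RingTheory.Sequence.IsRegular M rs ∧ I = Ideal.ofList rs) ∧
  I ≤ a ⊓ b ∧
  a • (⊤ : Submodule R M) ≠ ⊤ ∧ b • (⊤ : Submodule R M) ≠ ⊤ ∧
  Submodule.modColon (I • (⊤ : Submodule R M)) a = b • (⊤ : Submodule R M) ∧
  Submodule.modColon (I • (⊤ : Submodule R M)) b = a • (⊤ : Submodule R M)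

/-- Cohomological dimension `cd(a, M) = sup { i | H^i_a(M) ≠ 0 }`. -/
def cohDim {R : Type u} [CommRing R] (a : Ideal R) (M : Type u) [AddCommGroup M]
    [Module R M] : ℕ∞ :=
  sSup {n : ℕ∞ | ∃ i : ℕ, n = i ∧ Nontrivial ↥((localCohomology a i).obj (ModuleCat.of R M))}

/-- `grade_M(a)`: the supremum of lengths of `M`-regular sequences contained in `a`. -/
def gradeM {R : Type u} [CommRing R] (a : Ideal R) (M : Type u) [AddCommGroup M]
    [Module R M] : ℕ :=
  sSup {n : ℕ | ∃ rs : List R, rs.length = n ∧ (∀ r ∈ rs, r ∈ a) ∧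
    RingTheory.Sequence.IsRegular M rs}

variable {R : Type u} [CommRing R] [IsNoetherianRing R]
variable {M : Type u} [AddCommGroup M] [Module R M] [Module.Finite R M] [Nontrivial M]

/-!
Local cohomology is the colimit of `Ext (R ⧸ a ^ n, -)`, so it has long exact sequences and every
element of it is killed by a power of `a`. If `x ∈ a` is regular on `Y` and `H^i_a(Y) = 0`, then the
connecting homomorphism identifies `H^i_a(Y / xY)` with the `x`-torsion of `H^(i+1)_a(Y)`, which
contains all elements whose annihilator is a prime containing `a`. Hence a weakly `M`-regular
sequence of length `t` generating `I ≤ a` gives `Ass H^t_a(M) = {p ∈ Ass (M / IM) | a ≤ p}`.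

For every ideal `b`, `M / (N :_M b)` embeds in a finite power of `M / N`. Therefore the linkage
equation `aM = IM :_M b` gives `Ass (M / aM) ⊆ Ass (M / IM)`, and so `Ass (M / aM) ⊆ Ass H^t_a(M)`.
The intersection of the left-hand side is the radical of `a + Ann M`, which is contained in every
member of the right-hand side.
-/

section AssociatedPrimes

variable {R : Type*} [CommRing R] {M : Type*} [AddCommGroup M] [Module R M]

lemma radical_annihilator_quotient_smul_top [Module.Finite R M] (a : Ideal R) :
    (Module.annihilator R (M ⧸ (a • ⊤ : Submodule R M))).radical =
      (a + Module.annihilator R M).radical := by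
  have h := Module.support_quotient (R := R) (M := M) a
  rw [Module.support_eq_zeroLocus, Module.support_eq_zeroLocus, ← PrimeSpectrum.zeroLocus_sup,
    PrimeSpectrum.zeroLocus_eq_iff] at h
  rw [h, sup_comm, Submodule.add_eq_sup]

variable [IsNoetherianRing R] {a p : Ideal R}

lemma mem_associatedPrimes_iff_of_injective {N : Type*} [AddCommGroup N] [Module R N]
    {f : N →ₗ[R] M} (hf : Function.Injective f) (hap : a ≤ p)
    (hrange : ∀ y : M, (∀ r ∈ a, r • y = 0) → ∃ w, f w = y) :
    p ∈ associatedPrimes R N ↔ p ∈ associatedPrimes R M := by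
  refine ⟨fun hp ↦ associatedPrimes.subset_of_injective hf hp, fun hp ↦ ?_⟩
  obtain ⟨hprime, y, rfl⟩ := isAssociatedPrime_iff.1 hp
  obtain ⟨w, rfl⟩ := hrange y fun r hr ↦ Submodule.mem_colon_singleton.1 (hap hr)
  refine isAssociatedPrime_iff.2 ⟨hprime, w, Ideal.ext fun r ↦ ?_⟩
  simp only [Submodule.mem_colon_singleton, Submodule.mem_bot, ← map_smul, map_eq_zero_iff f hf]

lemma mem_associatedPrimes_quotient_iff {N : Submodule R M} :
    p ∈ associatedPrimes R (M ⧸ N) ↔ p.IsPrime ∧ ∃ y, p = N.colon {y} := by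
  have colon_mk (y : M) :
      (⊥ : Submodule R (M ⧸ N)).colon {Submodule.Quotient.mk y} = N.colon {y} := by
    ext r
    rw [Submodule.mem_colon_singleton, Submodule.mem_colon_singleton, Submodule.mem_bot,
      ← Submodule.Quotient.mk_smul, Submodule.Quotient.mk_eq_zero]
  simp only [AssociatedPrimes.mem_iff, isAssociatedPrime_iff,
    (Submodule.Quotient.mk_surjective N).exists, colon_mk]

lemma sInf_associatedPrimes [Module.Finite R M] :
    sInf (associatedPrimes R M) = (Module.annihilator R M).radical := by
  refine le_antisymm ?_ (le_sInf fun p hp ↦ hp.isPrime.radical_le_iff.2 ?_)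
  · rw [← Ideal.sInf_minimalPrimes]
    exact sInf_le_sInf
      (Module.associatedPrimes.minimalPrimes_annihilator_subset_associatedPrimes R M)
  · exact Submodule.annihilator_top.symm.trans_le hp.annihilator_le

end AssociatedPrimes

section ModColon

variable {R : Type u} [CommRing R] {M : Type u} [AddCommGroup M] [Module R M]

lemma mem_modColon_iff_le_colon {N : Submodule R M} {b : Ideal R} {y : M} :
    y ∈ Submodule.modColon N b ↔ b ≤ N.colon {y} := by
  simp only [Submodule.modColon, Submodule.mem_iInf, Submodule.mem_comap, LinearMap.lsmul_apply,
    SetLike.le_def, Submodule.mem_colon_singleton]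

lemma modColon_span_colon (N : Submodule R M) (s : Finset R) (y : M) :
    (Submodule.modColon N (Ideal.span (s : Set R))).colon {y} = s.inf fun t ↦ N.colon {t • y} := by
  ext r
  simp only [Submodule.mem_colon_singleton, mem_modColon_iff_le_colon, Ideal.span_le,
    Submodule.mem_finsetInf, Set.subset_def, SetLike.mem_coe, smul_comm r]

lemma associatedPrimes_quotient_modColon_subset [IsNoetherianRing R] (N : Submodule R M)
    (b : Ideal R) :
    associatedPrimes R (M ⧸ Submodule.modColon N b) ⊆ associatedPrimes R (M ⧸ N) := by
  intro p hp
  obtain ⟨s, rfl⟩ := IsNoetherian.noetherian b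
  obtain ⟨hprime, y, hy⟩ := mem_associatedPrimes_quotient_iff.1 hp
  rw [modColon_span_colon] at hy
  obtain ⟨t, -, ht⟩ := Ideal.eq_inf_of_isPrime_inf (hy ▸ hprime)
  exact mem_associatedPrimes_quotient_iff.2 ⟨hprime, t • y, hy.trans ht.symm⟩

end ModColon

-- `localCohomology` is defined by the derived functor `Ext R (ModuleCat R)`, but long exact
-- sequences are available for `Abelian.Ext`: the two are compared on a projective resolution.
section ExtComparison

open Opposite Limits Abelian ProjectiveResolution

variable {R : Type u} [CommRing R] {X : ModuleCat.{u} R} (P : ProjectiveResolution X)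
  (Y : ModuleCat.{u} R) (n : ℕ)

/-- The contravariant functor `Hom(-, Y)`, with values in the opposite category as in the definition
of `Ext R (ModuleCat R)`. -/
abbrev opYoneda : ModuleCat.{u} R ⥤ (ModuleCat.{u} R)ᵒᵖ :=
  ((linearYoneda R (ModuleCat.{u} R)).obj Y).rightOp

/-- The complex `Hom(P, Y)`, as a chain complex in the opposite category. -/
abbrev homComplex : ChainComplex (ModuleCat.{u} R)ᵒᵖ ℕ :=
  ((opYoneda Y).mapHomologicalComplex _).obj P.complex

/-- The module of `n`-cocycles of `Hom(P, Y)`. -/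
abbrev homCocycles : ModuleCat.{u} R := ((homComplex P Y).opcycles n).unop

/-- The inclusion of the `n`-cocycles into `Hom(Pₙ, Y)`. -/
def iHomCocycles : homCocycles P Y n →ₗ[R] (P.complex.X n ⟶ Y) :=
  ((homComplex P Y).pOpcycles n).unop.hom

/-- The isomorphism between `Ext R (ModuleCat R) n` and the `n`-th cohomology of `Hom(P, Y)`, in the
opposite category. -/
def derivedExtIso : ((opYoneda Y).leftDerived n).obj X ≅ (homComplex P Y).homology n :=
  P.isoLeftDerivedObj (opYoneda Y) n

/-- The map sending a cocycle of `Hom(P, Y)` to its class in `Ext R (ModuleCat R) n`. -/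
def derivedExtMk : homCocycles P Y n →ₗ[R] ((Ext R (ModuleCat.{u} R) n).obj (op X)).obj Y :=
  ((derivedExtIso P Y n).hom ≫ (homComplex P Y).homologyι n).unop.hom

lemma iHomCocycles_injective : Function.Injective (iHomCocycles P Y n) :=
  (ModuleCat.mono_iff_injective _).1 (unop_mono_of_epi ((homComplex P Y).pOpcycles n))

lemma derivedExtMk_surjective : Function.Surjective (derivedExtMk P Y n) :=
  (ModuleCat.epi_iff_surjective _).1 (unop_epi_of_mono _)

variable {Y n}

lemma d_comp_iHomCocycles (e : homCocycles P Y n) (m : ℕ) :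
    P.complex.d m n ≫ iHomCocycles P Y n e = 0 :=
  congrArg (fun f ↦ f.unop.hom e) ((homComplex P Y).d_pOpcycles m n)

lemma exists_iHomCocycles_eq {f : P.complex.X n ⟶ Y} (hf : P.complex.d (n + 1) n ≫ f = 0) :
    ∃ e, iHomCocycles P Y n e = f := by
  have hexact : (ShortComplex.mk _ _ ((homComplex P Y).d_pOpcycles (n + 1) n)).Exact :=
    ShortComplex.exact_of_g_is_cokernel _ ((homComplex P Y).opcyclesIsCokernel (n + 1) n (by simp))
  exact (ShortComplex.moduleCat_exact_iff _).1 hexact.unop f hf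

lemma derivedExtMk_eq_zero_iff (e : homCocycles P Y n) :
    derivedExtMk P Y n e = 0 ↔
      ∃ (m : ℕ) (g : P.complex.X m ⟶ Y), P.complex.d n m ≫ g = iHomCocycles P Y n e := by
  let L := homComplex P Y
  have mk_eq_zero_iff : derivedExtMk P Y n e = 0 ↔ (L.homologyι n).unop.hom e = 0 :=
    map_eq_zero_iff (derivedExtIso P Y n).hom.unop.hom
      ((ModuleCat.mono_iff_injective _).1 (unop_mono_of_epi _))
  have boundary_apply (m : ℕ) (g : P.complex.X m ⟶ Y) :
      iHomCocycles P Y n ((L.fromOpcycles n m).unop.hom g) = P.complex.d n m ≫ g :=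
    congrArg (fun f ↦ f.unop.hom g) (L.p_fromOpcycles n m)
  rw [mk_eq_zero_iff]
  constructor
  · intro he
    have hexact : (ShortComplex.mk _ _
        (L.homologyι_comp_fromOpcycles n ((ComplexShape.down ℕ).next n))).Exact :=
      ShortComplex.exact_of_f_is_kernel _ (L.homologyIsKernel n _ rfl)
    obtain ⟨g, hg⟩ := (ShortComplex.moduleCat_exact_iff _).1 hexact.unop e he
    exact ⟨_, g, (boundary_apply _ g).symm.trans (congrArg (iHomCocycles P Y n) hg)⟩
  · rintro ⟨m, g, hg⟩
    rw [← iHomCocycles_injective P Y n ((boundary_apply m g).trans hg)]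
    exact congrArg (fun f ↦ f.unop.hom g) (L.homologyι_comp_fromOpcycles n m)

variable {X' : ModuleCat.{u} R} {P' : ProjectiveResolution X'} {f : X' ⟶ X} {P}

lemma leftDerived_map_comp_derivedExtIso_hom (φ : ProjectiveResolution.Hom P' P f) :
    ((opYoneda Y).leftDerived n).map f ≫ (derivedExtIso P Y n).hom = (derivedExtIso P' Y n).hom ≫
      HomologicalComplex.homologyMap (((opYoneda Y).mapHomologicalComplex _).map φ.hom) n :=
  ProjectiveResolution.isoLeftDerivedObj_hom_naturality f P' P φ.hom
    φ.hom_f_zero_comp_π_f_zero (opYoneda Y) n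

lemma exists_derivedExtMk_eq_map (φ : ProjectiveResolution.Hom P' P f) (e : homCocycles P Y n) :
    ∃ e' : homCocycles P' Y n, iHomCocycles P' Y n e' = φ.hom.f n ≫ iHomCocycles P Y n e ∧
      derivedExtMk P' Y n e' =
        ((Ext R (ModuleCat.{u} R) n).map f.op).app Y (derivedExtMk P Y n e) := by
  let ψ : homComplex P' Y ⟶ homComplex P Y := ((opYoneda Y).mapHomologicalComplex _).map φ.hom
  have naturality : ((opYoneda Y).leftDerived n).map f ≫
      (derivedExtIso P Y n).hom ≫ (homComplex P Y).homologyι n =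
        ((derivedExtIso P' Y n).hom ≫ (homComplex P' Y).homologyι n) ≫
          HomologicalComplex.opcyclesMap ψ n := by
    rw [Category.assoc, ← HomologicalComplex.homologyι_naturality, ← Category.assoc,
      leftDerived_map_comp_derivedExtIso_hom, Category.assoc]
  exact ⟨(HomologicalComplex.opcyclesMap ψ n).unop.hom e,
    congrArg (fun g ↦ g.unop.hom e) (HomologicalComplex.p_opcyclesMap ψ n),
    (congrArg (fun g ↦ g.unop.hom e) naturality).symm⟩

lemma extMk_eq_zero_iff_eq_zero {f : P.complex.X 0 ⟶ Y} (hf : P.complex.d 1 0 ≫ f = 0) :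
    P.extMk f 1 rfl hf = 0 ↔ f = 0 := by
  have d_zero_one : P.cochainComplex.d (-(0 : ℕ)) 1 = 0 :=
    (CochainComplex.isZero_of_isStrictlyLE P.cochainComplex 0 1).eq_of_tgt _ _
  rw [← P.extEquivCohomologyClass.apply_eq_iff_eq, P.extEquivCohomologyClass_extMk,
    P.extEquivCohomologyClass_zero, CochainComplex.HomComplex.CohomologyClass.mk_eq_zero_iff,
    CochainComplex.HomComplex.Cocycle.toSingleMk_mem_coboundaries_iff _ _ _ _ _ 1 (by simp)]
  simp only [d_zero_one, zero_comp, exists_const, eq_comm (a := (0 : _ ⟶ _)),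
    Preadditive.IsIso.comp_left_eq_zero]

lemma extMk_eq_zero_iff_exists {f : P.complex.X n ⟶ Y} (hf : P.complex.d (n + 1) n ≫ f = 0) :
    P.extMk f (n + 1) rfl hf = 0 ↔
      ∃ (m : ℕ) (g : P.complex.X m ⟶ Y), P.complex.d n m ≫ g = f := by
  cases n with
  | zero =>
    simp only [extMk_eq_zero_iff_eq_zero hf, P.complex.shape 0 _ (Nat.succ_ne_zero _), zero_comp,
      exists_const, eq_comm (a := f)]
  | succ n =>
    rw [P.extMk_eq_zero_iff f (n + 2) rfl hf n rfl]
    refine ⟨fun ⟨g, hg⟩ ↦ ⟨n, g, hg⟩, fun ⟨m, g, hg⟩ ↦ ?_⟩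
    obtain rfl | hm := eq_or_ne m n
    · exact ⟨g, hg⟩
    · rw [P.complex.shape (n + 1) m (by simpa using hm), zero_comp] at hg
      exact ⟨0, by rw [← hg, comp_zero]⟩

/-- The map sending a cocycle of `Hom(P, Y)` to its class in `Abelian.Ext X Y n`. -/
def extMkLinear (P : ProjectiveResolution X) (Y : ModuleCat.{u} R) (n : ℕ) :
    homCocycles P Y n →ₗ[R] Abelian.Ext X Y n where
  toFun e := P.extMk (iHomCocycles P Y n e) (n + 1) rfl (d_comp_iHomCocycles P e (n + 1))
  map_add' e e' := by simp only [map_add, P.add_extMk]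
  map_smul' r e := by
    simp only [map_smul, RingHom.id_apply, Abelian.Ext.smul_eq_comp_mk₀, P.extMk_comp_mk₀,
      Linear.comp_smul, Category.comp_id]

lemma extMkLinear_surjective : Function.Surjective (extMkLinear P Y n) := by
  intro α
  obtain ⟨f, hf, rfl⟩ := P.extMk_surjective α (n + 1) rfl
  obtain ⟨e, rfl⟩ := exists_iHomCocycles_eq P hf
  exact ⟨e, rfl⟩

lemma ker_derivedExtMk (P : ProjectiveResolution X) (Y : ModuleCat.{u} R) (n : ℕ) :
    LinearMap.ker (derivedExtMk P Y n) = LinearMap.ker (extMkLinear P Y n) :=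
  Submodule.ext fun e ↦ (derivedExtMk_eq_zero_iff P e).trans
    (extMk_eq_zero_iff_exists (d_comp_iHomCocycles P e (n + 1))).symm

/-- The two definitions of `Ext` in a category of modules agree. -/
def extLinearEquiv (P : ProjectiveResolution X) (Y : ModuleCat.{u} R) (n : ℕ) :
    ((Ext R (ModuleCat.{u} R) n).obj (op X)).obj Y ≃ₗ[R] Abelian.Ext X Y n :=
  ((derivedExtMk P Y n).quotKerEquivOfSurjective (derivedExtMk_surjective P Y n)).symm ≪≫ₗ
    Submodule.quotEquivOfEq _ _ (ker_derivedExtMk P Y n) ≪≫ₗ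
      (extMkLinear P Y n).quotKerEquivOfSurjective extMkLinear_surjective

lemma extLinearEquiv_derivedExtMk (e : homCocycles P Y n) :
    extLinearEquiv P Y n (derivedExtMk P Y n e) = extMkLinear P Y n e := by
  have symm_mk : ((derivedExtMk P Y n).quotKerEquivOfSurjective
      (derivedExtMk_surjective P Y n)).symm (derivedExtMk P Y n e) = Submodule.Quotient.mk e :=
    (LinearEquiv.symm_apply_eq _).2 rfl
  simp only [extLinearEquiv, LinearEquiv.trans_apply]
  rw [symm_mk]
  rfl

lemma extLinearEquiv_map (P' : ProjectiveResolution X') (P : ProjectiveResolution X) (f : X' ⟶ X)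
    (z : ((Ext R (ModuleCat.{u} R) n).obj (op X)).obj Y) :
    extLinearEquiv P' Y n (((Ext R (ModuleCat.{u} R) n).map f.op).app Y z) =
      (Ext.mk₀ f).comp (extLinearEquiv P Y n z) (zero_add n) := by
  let φ : ProjectiveResolution.Hom P' P f := ⟨lift f P' P, lift_commutes_zero f P' P⟩
  obtain ⟨e, rfl⟩ := derivedExtMk_surjective P Y n z
  obtain ⟨e', he', hz⟩ := exists_derivedExtMk_eq_map φ e
  rw [← hz, extLinearEquiv_derivedExtMk, extLinearEquiv_derivedExtMk]
  simp only [extMkLinear, LinearMap.coe_mk, AddHom.coe_mk, he']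
  exact (mk₀_comp_extMk _ _ rfl (d_comp_iHomCocycles P e (n + 1)) φ).symm

end ExtComparison

section LocalCohomology

open Opposite Limits Abelian

variable {R : Type u} [CommRing R] (a : Ideal R)

/-- The module `R ⧸ a ^ n`, as a term of the diagram defining local cohomology. -/
abbrev powQuotient (n : ℕ) : ModuleCat.{u} R :=
  (localCohomology.ringModIdeals (localCohomology.idealPowersDiagram a)).obj (op n)

/-- The projection `R ⧸ a ^ m ⟶ R ⧸ a ^ n` for `n ≤ m`. -/
def powQuotientMap {n m : ℕ} (h : n ≤ m) : powQuotient a m ⟶ powQuotient a n :=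
  (localCohomology.ringModIdeals (localCohomology.idealPowersDiagram a)).map (homOfLE h).op

/-- The `i`-th local cohomology module of `Y` with support in `a`. -/
abbrev localCohomologyModule (i : ℕ) (Y : ModuleCat.{u} R) : ModuleCat.{u} R :=
  (localCohomology a i).obj Y

namespace localCohomologyModule

/-- The modules `Ext R (ModuleCat R) i` of `R ⧸ a ^ n` and `Y` form a cocone with point the local
cohomology of `Y`. -/
def cocone (i : ℕ) (Y : ModuleCat.{u} R) :
    Cocone (localCohomology.diagram (localCohomology.idealPowersDiagram a) i ⋙
      (evaluation _ _).obj Y) :=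
  ((evaluation _ _).obj Y).mapCocone
    (colimit.cocone (localCohomology.diagram (localCohomology.idealPowersDiagram a) i))

/-- `localCohomologyModule.cocone` is a colimit cocone. -/
def isColimitCocone (i : ℕ) (Y : ModuleCat.{u} R) : IsColimit (cocone a i Y) :=
  isColimitOfPreserves _ (colimit.isColimit _)

variable (i n : ℕ) (Y : ModuleCat.{u} R)

/-- The comparison of the two definitions of `Ext`, for `R ⧸ a ^ n`. -/
def powExtEquiv : ((Ext R (ModuleCat.{u} R) i).obj (op (powQuotient a n))).obj Y ≃ₗ[R]
    Abelian.Ext (powQuotient a n) Y i :=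
  extLinearEquiv (projectiveResolution (powQuotient a n)) Y i

/-- The structure map of `localCohomologyModule.cocone` at `n`. -/
def ι : ((Ext R (ModuleCat.{u} R) i).obj (op (powQuotient a n))).obj Y ⟶
    localCohomologyModule a i Y :=
  (cocone a i Y).ι.app (op (op n))

/-- The canonical map from `Abelian.Ext (R ⧸ a ^ n) Y i` to local cohomology. -/
def ofExt : Abelian.Ext (powQuotient a n) Y i →ₗ[R] localCohomologyModule a i Y :=
  (ι a i n Y).hom ∘ₗ (powExtEquiv a i n Y).symm.toLinearMap

variable {i n Y}

lemma ofExt_powExtEquiv (z : ((Ext R (ModuleCat.{u} R) i).obj (op (powQuotient a n))).obj Y) :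
    ofExt a i n Y (powExtEquiv a i n Y z) = ι a i n Y z :=
  congrArg (ι a i n Y) ((powExtEquiv a i n Y).symm_apply_apply z)

lemma mk₀_powQuotientMap_comp {m : ℕ} (h : n ≤ m)
    (z : ((Ext R (ModuleCat.{u} R) i).obj (op (powQuotient a n))).obj Y) :
    (Ext.mk₀ (powQuotientMap a h)).comp (powExtEquiv a i n Y z) (zero_add i) =
      powExtEquiv a i m Y (((Ext R (ModuleCat.{u} R) i).map (powQuotientMap a h).op).app Y z) :=
  (extLinearEquiv_map _ _ _ z).symm

lemma ofExt_mk₀_comp {m : ℕ} (h : n ≤ m) (e : Abelian.Ext (powQuotient a n) Y i) :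
    ofExt a i m Y ((Ext.mk₀ (powQuotientMap a h)).comp e (zero_add i)) = ofExt a i n Y e := by
  obtain ⟨z, rfl⟩ := (powExtEquiv a i n Y).surjective e
  rw [mk₀_powQuotientMap_comp, ofExt_powExtEquiv, ofExt_powExtEquiv]
  exact congrArg (fun f ↦ f.hom z) ((cocone a i Y).w (homOfLE h).op.op)

instance : PreservesColimitsOfShape ℕᵒᵖᵒᵖ (forget (ModuleCat.{u} R)) :=
  have := preservesSmallestFilteredColimits_of_preservesFilteredColimits (forget (ModuleCat.{u} R))
  inferInstance

lemma exists_ofExt_eq (z : localCohomologyModule a i Y) : ∃ n e, ofExt a i n Y e = z := by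
  obtain ⟨j, y, hy⟩ := Concrete.isColimit_exists_rep _ (isColimitCocone a i Y) z
  exact ⟨j.unop.unop, _, (ofExt_powExtEquiv a y).trans hy⟩

variable {a} in
lemma exists_mk₀_comp_eq_zero {e : Abelian.Ext (powQuotient a n) Y i} (he : ofExt a i n Y e = 0) :
    ∃ (m : ℕ) (h : n ≤ m), (Ext.mk₀ (powQuotientMap a h)).comp e (zero_add i) = 0 := by
  obtain ⟨z, rfl⟩ := (powExtEquiv a i n Y).surjective e
  have hz : ι a i n Y z = ι a i n Y 0 := by rw [← ofExt_powExtEquiv, he, map_zero]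
  obtain ⟨k, f, g, hfg⟩ :=
    (Concrete.isColimit_rep_eq_iff_exists _ (isColimitCocone a i Y)
      (i := op (op n)) (j := op (op n)) z 0).1 hz
  refine ⟨k.unop.unop, leOfHom f.unop.unop, ?_⟩
  rw [mk₀_powQuotientMap_comp, LinearEquiv.map_eq_zero_iff]
  exact hfg.trans (map_zero ((localCohomology.diagram (localCohomology.idealPowersDiagram a) i ⋙
    (evaluation _ _).obj Y).map g).hom)

section Lift

variable {a} {N : Type u} [AddCommGroup N] [Module R N]
  (φ : ∀ n, Abelian.Ext (powQuotient a n) Y i →ₗ[R] N)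
  (hφ : ∀ (n m : ℕ) (h : n ≤ m) (e : Abelian.Ext (powQuotient a n) Y i),
    φ m ((Ext.mk₀ (powQuotientMap a h)).comp e (zero_add i)) = φ n e)

/-- The cocone corresponding to a compatible family of linear maps. -/
def liftCocone : Cocone (localCohomology.diagram (localCohomology.idealPowersDiagram a) i ⋙
    (evaluation _ _).obj Y) where
  pt := ModuleCat.of R N
  ι :=
    { app j := ModuleCat.ofHom (φ j.unop.unop ∘ₗ (powExtEquiv a i j.unop.unop Y).toLinearMap)
      naturality j k f := by
        ext z
        exact (congrArg (φ k.unop.unop)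
          (mk₀_powQuotientMap_comp a (leOfHom f.unop.unop) z).symm).trans (hφ _ _ _ _) }

/-- The linear map out of local cohomology induced by a compatible family of linear maps. -/
def lift : localCohomologyModule a i Y →ₗ[R] N :=
  ((isColimitCocone a i Y).desc (liftCocone φ hφ)).hom

lemma lift_ofExt (e : Abelian.Ext (powQuotient a n) Y i) :
    lift φ hφ (ofExt a i n Y e) = φ n e := by
  obtain ⟨z, rfl⟩ := (powExtEquiv a i n Y).surjective e
  rw [ofExt_powExtEquiv]
  exact congrArg (fun f ↦ f.hom z) ((isColimitCocone a i Y).fac (liftCocone φ hφ) (op (op n)))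

lemma lift_injective (hinj : ∀ n, Function.Injective (φ n)) :
    Function.Injective (lift φ hφ) := by
  rw [injective_iff_map_eq_zero]
  intro z hz
  obtain ⟨n, e, rfl⟩ := exists_ofExt_eq a z
  rw [lift_ofExt, map_eq_zero_iff _ (hinj n)] at hz
  rw [hz, map_zero]

end Lift

section Map

variable {p j : ℕ} {Z : ModuleCat.{u} R}

/-- The map on local cohomology induced by composition with a class in `Ext Y Z p`. -/
def map (β : Abelian.Ext Y Z p) (h : i + p = j) :
    localCohomologyModule a i Y →ₗ[R] localCohomologyModule a j Z :=
  lift (fun n ↦ ofExt a j n Z ∘ₗ β.postcompOfLinear R (powQuotient a n) h) fun n m hnm e ↦ by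
    simp only [LinearMap.coe_comp, Function.comp_apply, LinearMap.flip_apply,
      Ext.bilinearCompOfLinear_apply_apply]
    rw [Ext.comp_assoc _ _ _ _ _ (by lia), ofExt_mk₀_comp]

lemma map_ofExt (β : Abelian.Ext Y Z p) (h : i + p = j) (e : Abelian.Ext (powQuotient a n) Y i) :
    map a β h (ofExt a i n Y e) = ofExt a j n Z (e.comp β h) :=
  lift_ofExt _ _ e

lemma map_mk₀_smul_id (r : R) (z : localCohomologyModule a i Y) :
    map a (Ext.mk₀ (r • 𝟙 Y)) (add_zero i) z = r • z := by
  obtain ⟨n, e, rfl⟩ := exists_ofExt_eq a z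
  rw [map_ofExt, ← Ext.smul_eq_comp_mk₀, map_smul]

lemma map_exact {q k : ℕ} {W : ModuleCat.{u} R} {β : Abelian.Ext Y Z p} {γ : Abelian.Ext Z W q}
    (hi : i + p = j) (hj : j + q = k)
    (hex : ∀ X : ModuleCat.{u} R, Function.Exact (fun e : Abelian.Ext X Y i ↦ e.comp β hi)
      (fun e : Abelian.Ext X Z j ↦ e.comp γ hj)) :
    Function.Exact (map a β hi) (map a γ hj) := by
  intro z
  constructor
  · intro hz
    obtain ⟨n, e, rfl⟩ := exists_ofExt_eq a z
    rw [map_ofExt] at hz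
    obtain ⟨m, h, hm⟩ := exists_mk₀_comp_eq_zero hz
    rw [← Ext.comp_assoc _ _ _ (zero_add j) _ (by lia)] at hm
    obtain ⟨e', he'⟩ := (hex _ _).1 hm
    refine ⟨ofExt a i m Y e', ?_⟩
    rw [map_ofExt, ← ofExt_mk₀_comp a h e]
    exact congrArg _ he'
  · rintro ⟨y, rfl⟩
    obtain ⟨n, e, rfl⟩ := exists_ofExt_eq a y
    have hcomp : (e.comp β hi).comp γ hj = 0 := (hex _ _).2 ⟨e, rfl⟩
    rw [map_ofExt, map_ofExt, hcomp, map_zero]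

end Map

section LongExactSequence

variable {S : ShortComplex (ModuleCat.{u} R)}

/-- The connecting homomorphism of the long exact sequence of local cohomology. -/
def connecting (hS : S.ShortExact) (i : ℕ) :
    localCohomologyModule a i S.X₃ →ₗ[R] localCohomologyModule a (i + 1) S.X₁ :=
  map a hS.extClass rfl

lemma map_g_connecting_exact (hS : S.ShortExact) (i : ℕ) :
    Function.Exact (map a (Ext.mk₀ S.g) (add_zero i)) (connecting a hS i) := by
  refine map_exact a _ _ fun X e ↦ ⟨Ext.covariant_sequence_exact₃ X hS e rfl, ?_⟩
  rintro ⟨e, rfl⟩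
  dsimp only
  rw [Ext.comp_assoc_of_second_deg_zero, hS.comp_extClass, Ext.comp_zero]

lemma connecting_map_f_exact (hS : S.ShortExact) (i : ℕ) :
    Function.Exact (connecting a hS i) (map a (Ext.mk₀ S.f) (add_zero (i + 1))) := by
  refine map_exact a _ _ fun X e ↦ ⟨fun he ↦ Ext.covariant_sequence_exact₁ X hS e he rfl, ?_⟩
  rintro ⟨e, rfl⟩
  dsimp only
  rw [Ext.comp_assoc_of_third_deg_zero, hS.extClass_comp, Ext.comp_zero]

lemma connecting_injective (hS : S.ShortExact) (h : Subsingleton (localCohomologyModule a i S.X₂)) :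
    Function.Injective (connecting a hS i) := by
  rw [injective_iff_map_eq_zero]
  intro w hw
  obtain ⟨z, rfl⟩ := (map_g_connecting_exact a hS i w).1 hw
  rw [Subsingleton.elim z 0, map_zero]

lemma exists_connecting_eq {x : R} (hx : IsSMulRegular Y x) {z : localCohomologyModule a (i + 1) Y}
    (hz : x • z = 0) : ∃ w, connecting a hx.smulShortComplex_shortExact i w = z :=
  (connecting_map_f_exact a hx.smulShortComplex_shortExact i z).1
    ((map_mk₀_smul_id a x z).trans hz)

end LongExactSequence

section Torsion

lemma smul_id_powQuotient_eq_zero {r : R} (hr : r ∈ a ^ n) : r • 𝟙 (powQuotient a n) = 0 := by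
  ext y
  obtain ⟨y, rfl⟩ := Ideal.Quotient.mk_surjective y
  exact Ideal.Quotient.eq_zero_iff_mem.2 (Ideal.mul_mem_right y _ hr)

lemma exists_forall_mem_pow_smul_eq_zero (z : localCohomologyModule a i Y) :
    ∃ n, ∀ r ∈ a ^ n, r • z = 0 := by
  obtain ⟨n, e, rfl⟩ := exists_ofExt_eq a z
  refine ⟨n, fun r hr ↦ ?_⟩
  rw [← map_smul, ← Ext.mk₀_id_comp e, ← Ext.smul_comp, ← Ext.mk₀_smul,
    smul_id_powQuotient_eq_zero a hr, Ext.mk₀_zero, Ext.zero_comp, map_zero]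

variable {a}

lemma subsingleton_of_isSMulRegular {x : R} (hxa : x ∈ a)
    (hx : IsSMulRegular (localCohomologyModule a i Y) x) :
    Subsingleton (localCohomologyModule a i Y) := by
  refine subsingleton_of_forall_eq 0 fun z ↦ ?_
  obtain ⟨n, hn⟩ := exists_forall_mem_pow_smul_eq_zero a z
  exact (hx.pow n).right_eq_zero_of_smul (hn _ (Ideal.pow_mem_pow hxa n))

end Torsion

section DegreeZero

/-- The evaluation of a class in `Abelian.Ext (R ⧸ a ^ n) Y 0`, viewed as a linear map, at `1`. -/
def evalOne (n : ℕ) (Y : ModuleCat.{u} R) : Abelian.Ext (powQuotient a n) Y 0 →ₗ[R] Y :=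
  LinearMap.applyₗ (Ideal.Quotient.mk (a ^ n) 1) ∘ₗ
    (ModuleCat.homLinearEquiv (S := R)).toLinearMap ∘ₗ (Ext.linearEquiv₀ (R := R)).toLinearMap

lemma evalOne_mk₀ (f : powQuotient a n ⟶ Y) :
    evalOne a n Y (Ext.mk₀ f) = f.hom (Ideal.Quotient.mk (a ^ n) 1) :=
  congrArg (fun g : powQuotient a n ⟶ Y ↦ g.hom (Ideal.Quotient.mk (a ^ n) 1))
    ((Ext.linearEquiv₀ (R := R)).apply_symm_apply f)

lemma evalOne_injective : Function.Injective (evalOne a n Y) := by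
  rw [injective_iff_map_eq_zero]
  intro e he
  obtain ⟨f, rfl⟩ := (Ext.linearEquiv₀ (R := R)).symm.surjective e
  rw [Ext.linearEquiv₀_symm_apply, evalOne_mk₀] at he
  rw [LinearEquiv.map_eq_zero_iff]
  exact ModuleCat.hom_ext (Submodule.linearMap_qext _ (LinearMap.ext_ring he))

/-- The map sending an element of the zeroth local cohomology of `Y`, represented by a linear map
on `R ⧸ a ^ n`, to the value of that map at `1`. -/
def zeroToModule (Y : ModuleCat.{u} R) : localCohomologyModule a 0 Y →ₗ[R] Y :=
  lift (fun n ↦ evalOne a n Y) fun n m h e ↦ by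
    obtain ⟨f, rfl⟩ := (Ext.linearEquiv₀ (R := R)).symm.surjective e
    rw [Ext.linearEquiv₀_symm_apply, Ext.mk₀_comp_mk₀, evalOne_mk₀, evalOne_mk₀]
    rfl

lemma zeroToModule_injective : Function.Injective (zeroToModule a Y) :=
  lift_injective _ _ fun _ ↦ evalOne_injective a

lemma exists_zeroToModule_eq {y : Y} (hy : ∀ r ∈ a, r • y = 0) :
    ∃ z, zeroToModule a Y z = y := by
  let f : powQuotient a 1 ⟶ Y := ModuleCat.ofHom
    (Submodule.liftQ (a ^ 1) (LinearMap.toSpanSingleton R Y y) fun r hr ↦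
      hy r (by rwa [pow_one] at hr))
  refine ⟨ofExt a 0 1 Y (Ext.mk₀ f), (lift_ofExt _ _ _).trans ?_⟩
  rw [evalOne_mk₀]
  exact one_smul R y

end DegreeZero

lemma subsingleton_of_isWeaklyRegular {a : Ideal R} {M : Type u} [AddCommGroup M] [Module R M]
    {rs : List R} (hrs : IsWeaklyRegular M rs) (hra : Ideal.ofList rs ≤ a) {i : ℕ}
    (hi : i < rs.length) : Subsingleton (localCohomologyModule a i (ModuleCat.of R M)) := by
  induction rs generalizing M i with
  | nil => exact absurd hi (Nat.not_lt_zero i)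
  | cons x rs ih =>
    obtain ⟨hxM, hrsM⟩ := (isWeaklyRegular_cons_iff M x rs).1 hrs
    rw [Ideal.ofList_cons, sup_le_iff, Ideal.span_singleton_le_iff_mem] at hra
    refine subsingleton_of_isSMulRegular hra.1 ?_
    cases i with
    | zero => exact hxM.of_injective (zeroToModule a (ModuleCat.of R M)) (zeroToModule_injective a)
    | succ i =>
      have : Subsingleton (localCohomologyModule a i ((ModuleCat.of R M).smulShortComplex x).X₃) :=
        ih hrsM hra.2 (Nat.lt_of_succ_lt_succ hi)
      refine .of_right_eq_zero_of_smul fun z hz ↦ ?_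
      obtain ⟨w, rfl⟩ := exists_connecting_eq a hxM hz
      exact (congrArg _ (Subsingleton.elim w 0)).trans (map_zero _)

end localCohomologyModule

end LocalCohomology

section LocalCohomologyAssociatedPrimes

variable {R : Type u} [CommRing R] {a : Ideal R}

namespace localCohomologyModule

lemma le_of_mem_associatedPrimes {p : Ideal R} {Y : ModuleCat.{u} R} {i : ℕ}
    (hp : p ∈ associatedPrimes R (localCohomologyModule a i Y)) : a ≤ p := by
  have hprime := hp.isPrime
  obtain ⟨-, z, rfl⟩ := hp
  obtain ⟨n, hn⟩ := exists_forall_mem_pow_smul_eq_zero a z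
  exact hprime.le_of_pow_le fun r hr ↦
    Ideal.le_radical (Submodule.mem_colon_singleton.2 (hn r hr))

variable [IsNoetherianRing R] {M : Type u} [AddCommGroup M] [Module R M]

variable (a) in
lemma associatedPrimes_zero (Y : ModuleCat.{u} R) :
    associatedPrimes R (localCohomologyModule a 0 Y) = {p ∈ associatedPrimes R Y | a ≤ p} := by
  have mem_iff {p : Ideal R} (hap : a ≤ p) :=
    mem_associatedPrimes_iff_of_injective (zeroToModule_injective a (Y := Y)) hap
      fun _ hy ↦ exists_zeroToModule_eq a hy
  exact Set.ext fun p ↦ ⟨fun hp ↦ ⟨(mem_iff (le_of_mem_associatedPrimes hp)).1 hp,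
    le_of_mem_associatedPrimes hp⟩, fun ⟨hp, hap⟩ ↦ (mem_iff hap).2 hp⟩

lemma associatedPrimes_succ {Y : ModuleCat.{u} R} {x : R} {i : ℕ} (hxa : x ∈ a)
    (hx : IsSMulRegular Y x) (h : Subsingleton (localCohomologyModule a i Y)) :
    associatedPrimes R (localCohomologyModule a (i + 1) Y) =
      associatedPrimes R (localCohomologyModule a i (ModuleCat.of R (QuotSMulTop x Y))) := by
  have mem_iff {p : Ideal R} (hap : a ≤ p) :=
    mem_associatedPrimes_iff_of_injective
      (connecting_injective a hx.smulShortComplex_shortExact h) hap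
      fun z hz ↦ exists_connecting_eq a hx (hz x hxa)
  exact Set.ext fun p ↦ ⟨fun hp ↦ (mem_iff (le_of_mem_associatedPrimes hp)).2 hp,
    fun hp ↦ (mem_iff (le_of_mem_associatedPrimes hp)).1 hp⟩

lemma associatedPrimes_length {rs : List R} (hrs : IsWeaklyRegular M rs)
    (hra : Ideal.ofList rs ≤ a) :
    associatedPrimes R (localCohomologyModule a rs.length (ModuleCat.of R M)) =
      {p ∈ associatedPrimes R (M ⧸ (Ideal.ofList rs • ⊤ : Submodule R M)) | a ≤ p} := by
  induction rs generalizing M with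
  | nil =>
    rw [List.length_nil, associatedPrimes_zero, LinearEquiv.AssociatedPrimes.eq
      (Submodule.quotEquivOfEqBot (Ideal.ofList [] • ⊤ : Submodule R M)
        (by rw [Ideal.ofList_nil, Submodule.bot_smul]))]
  | cons x rs ih =>
    have hvanish := subsingleton_of_isWeaklyRegular hrs hra (Nat.lt_succ_self rs.length)
    obtain ⟨hxM, hrsM⟩ := (isWeaklyRegular_cons_iff M x rs).1 hrs
    rw [Ideal.ofList_cons, sup_le_iff, Ideal.span_singleton_le_iff_mem] at hra
    rw [List.length_cons, associatedPrimes_succ hra.1 hxM hvanish, ih hrsM hra.2,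
      LinearEquiv.AssociatedPrimes.eq
        (Submodule.quotOfListConsSMulTopEquivQuotSMulTopInner M x rs)]

end localCohomologyModule

end LocalCohomologyAssociatedPrimes

lemma gradeM_eq_length {R : Type u} [CommRing R] {a : Ideal R} {M : Type u} [AddCommGroup M]
    [Module R M] {rs : List R} (hrs : IsRegular M rs) (hra : Ideal.ofList rs ≤ a)
    [Nontrivial (localCohomologyModule a rs.length (ModuleCat.of R M))] :
    gradeM a M = rs.length := by
  refine IsGreatest.csSup_eq ⟨⟨rs, rfl, Ideal.span_le.1 hra, hrs⟩, ?_⟩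
  rintro _ ⟨rs', rfl, hra', hrs'⟩
  by_contra! hlt
  have := localCohomologyModule.subsingleton_of_isWeaklyRegular hrs'.toIsWeaklyRegular
    (Ideal.span_le.2 hra') hlt
  exact not_subsingleton (localCohomologyModule a rs.length (ModuleCat.of R M)) this

section Linkage

variable {R : Type u} [CommRing R] [IsNoetherianRing R] {M : Type u} [AddCommGroup M] [Module R M]
  {a b : Ideal R} {rs : List R}

theorem associatedPrimes_quotient_subset (hrs : IsWeaklyRegular M rs) (hra : Ideal.ofList rs ≤ a)
    (hab : Submodule.modColon (Ideal.ofList rs • ⊤ : Submodule R M) b = a • ⊤) :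
    associatedPrimes R (M ⧸ (a • ⊤ : Submodule R M)) ⊆
      associatedPrimes R (localCohomologyModule a rs.length (ModuleCat.of R M)) := by
  rw [localCohomologyModule.associatedPrimes_length hrs hra]
  refine fun p hp ↦ ⟨associatedPrimes_quotient_modColon_subset _ b (hab.symm ▸ hp), ?_⟩
  obtain ⟨-, y, rfl⟩ := mem_associatedPrimes_quotient_iff.1 hp
  exact fun r hr ↦
    Submodule.mem_colon_singleton.2 (Submodule.smul_mem_smul hr Submodule.mem_top)

theorem radical_add_annihilator_le (hrs : IsWeaklyRegular M rs) (hra : Ideal.ofList rs ≤ a) :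
    (a + Module.annihilator R M).radical ≤
      sInf (associatedPrimes R (localCohomologyModule a rs.length (ModuleCat.of R M))) := by
  rw [localCohomologyModule.associatedPrimes_length hrs hra]
  refine le_sInf fun p ⟨hp, hap⟩ ↦ hp.isPrime.radical_le_iff.2 (sup_le hap ?_)
  calc Module.annihilator R M
      ≤ Module.annihilator R (M ⧸ (Ideal.ofList rs • ⊤ : Submodule R M)) :=
        LinearMap.annihilator_le_of_surjective _ (Submodule.mkQ_surjective _)
    _ = (⊤ : Submodule R _).annihilator := Submodule.annihilator_top.symm
    _ ≤ p := hp.annihilator_le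

theorem stmt15_general [Module.Finite R M] (hrs : IsRegular M rs) (hra : Ideal.ofList rs ≤ a)
    (ha : a • (⊤ : Submodule R M) ≠ ⊤)
    (hab : Submodule.modColon (Ideal.ofList rs • ⊤ : Submodule R M) b = a • ⊤) :
    (a + Module.annihilator R M).radical =
      sInf (associatedPrimes R
        ↥((localCohomology a (gradeM a M)).obj (ModuleCat.of R M))) := by
  have hsub := associatedPrimes_quotient_subset hrs.toIsWeaklyRegular hra hab
  have hnontrivial : Nontrivial (localCohomologyModule a rs.length (ModuleCat.of R M)) := by
    have : Nontrivial (M ⧸ (a • ⊤ : Submodule R M)) := Submodule.Quotient.nontrivial_iff.2 ha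
    obtain ⟨p, hp⟩ := associatedPrimes.nonempty R (M ⧸ (a • ⊤ : Submodule R M))
    by_contra! h
    exact not_isAssociatedPrime_of_subsingleton (hsub hp)
  rw [gradeM_eq_length hrs hra]
  refine le_antisymm (radical_add_annihilator_le hrs.toIsWeaklyRegular hra) ?_
  rw [← radical_annihilator_quotient_smul_top, ← sInf_associatedPrimes]
  exact sInf_le_sInf hsub

end Linkage

theorem stmt15 (a : Ideal R) (h : ∃ I b, Ideal.IsLinkedBy M I a b) :
    (a + Module.annihilator R M).radical =
      sInf (associatedPrimes R
        ↥((localCohomology a (gradeM a M)).obj (ModuleCat.of R M))) := by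
  obtain ⟨I, b, ⟨rs, hrs, rfl⟩, hI, ha, -, -, hab⟩ := h
  exact stmt15_general hrs (hI.trans inf_le_left) ha hab
end
end

section
/- Let (R, m) be a Noetherian local ring, M a nonzero finitely generated R-module, x_1, …, x_t an M-regular sequence, and set n = dim M. If H^n_p(M) = 0 for every p ∈ Ass_R(M/(x_1, …, x_t)M), then H^n_a(M) = 0 for every ideal a ⊇ (x_1, …, x_t) with grade_M(a) = t. -/
universe u

open RingTheory.Sequence CategoryTheory

noncomputable section

variable {R : Type u} [CommRing R] [IsNoetherianRing R] [IsLocalRing R]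
variable {M : Type u} [AddCommGroup M] [Module R M] [Module.Finite R M] [Nontrivial M]

/-!
The point is that for `a ≤ b ≠ ⊤` and `n ≥ dim M` the map `H^n_b(M) → H^n_a(M)` is onto; enlarging
`a` by one element `y` of `b` at a time, it suffices to treat `b = a + (y)`.

First, every class of `H^n_a(M)` is killed by a power of `y`, because `H^n_a(M)` is supported at the
maximal ideal: a class whose annihilator lies in the prime `q` forces `dim M_q ≥ n` (Grothendieck
vanishing, by dévissage to modules `R ⧸ P` and division by an element of `a` outside `P`), whereas
`dim M_q < dim M` for nonmaximal `q`.

Second, a class killed by a power of `y` comes from `H^n_{a + (y)}(M)`. Indeed, for an injective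
module `E` over a Noetherian ring the submodule `Γ_a(E)` is injective, hence `Γ_a(E) → Γ_a(E)_y` is
onto, and in an injective resolution this allows one to correct a cocycle by a coboundary so that it
is killed by a power of `y`.

Finally, `grade_M(a) = t` forces `a` to consist of zero divisors on `M ⧸ (x₁, …, x_t)M`, so by prime
avoidance `a ≤ p` for some associated prime `p` of this module.
-/

section LeftDerivedExt

open Limits Opposite Abelian

section LeftDerived

variable {C D : Type*} [Category* C] [Abelian C] [HasProjectiveResolutions C] [Category* D]
  [Abelian D] {X X' : C} (P : ProjectiveResolution X) (F : C ⥤ D) [F.Additive] (n : ℕ)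

/-- `P.isoLeftDerivedObj F n`, with its target in the form that the `homologyι` API expects. -/
def leftDerivedIso :
    (F.leftDerived n).obj X ≅ ((F.mapHomologicalComplex _).obj P.complex).homology n :=
  P.isoLeftDerivedObj F n

/-- The embedding of `(Lₙ F)(X) = Hₙ(F P)` into the cokernel of `F Pₙ₊₁ ⟶ F Pₙ`, for `P` a
projective resolution of `X`. -/
def leftDerivedι :
    (F.leftDerived n).obj X ⟶ ((F.mapHomologicalComplex _).obj P.complex).opcycles n :=
  (leftDerivedIso P F n).hom ≫ HomologicalComplex.homologyι _ n

instance : Mono (leftDerivedι P F n) :=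
  mono_comp _ _

lemma leftDerivedι_comp_fromOpcycles :
    leftDerivedι P F n ≫ ((F.mapHomologicalComplex _).obj P.complex).fromOpcycles n
      ((ComplexShape.down ℕ).next n) = 0 := by
  simp [leftDerivedι]

lemma leftDerivedι_exact :
    (ShortComplex.mk _ _ (leftDerivedι_comp_fromOpcycles P F n)).Exact :=
  ShortComplex.exact_of_f_is_kernel _ <|
    (((F.mapHomologicalComplex _).obj P.complex).homologyIsKernel n _ rfl).ofIsoLimit
      (Fork.ext (leftDerivedIso P F n).symm (Iso.inv_hom_id_assoc (leftDerivedIso P F n) _))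

variable {P} in
lemma leftDerivedι_naturality {P' : ProjectiveResolution X'} {g : X' ⟶ X}
    (φ : ProjectiveResolution.Hom P' P g) :
    (F.leftDerived n).map g ≫ leftDerivedι P F n = leftDerivedι P' F n ≫
      HomologicalComplex.opcyclesMap ((F.mapHomologicalComplex _).map φ.hom) n := by
  have hφ : φ.hom.f 0 ≫ P.π.f 0 = P'.π.f 0 ≫ g := by
    simpa using! φ.hom_f_zero_comp_π_f_zero
  have hiso : (F.leftDerived n).map g ≫ (leftDerivedIso P F n).hom =
      (leftDerivedIso P' F n).hom ≫
        HomologicalComplex.homologyMap ((F.mapHomologicalComplex _).map φ.hom) n :=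
    ProjectiveResolution.isoLeftDerivedObj_hom_naturality g P' P φ.hom hφ F n
  rw [leftDerivedι, leftDerivedι, reassoc_of% hiso, HomologicalComplex.homologyι_naturality,
    Category.assoc]

end LeftDerived

section ExtMk

variable {C : Type*} [Category* C] [Abelian C] [HasExt C] {X Y : C} {n : ℕ}

lemma extMk_zero_eq_zero_iff (P : ProjectiveResolution X) (f : P.complex.X 0 ⟶ Y)
    (hf : P.complex.d 1 0 ≫ f = 0) : P.extMk f 1 rfl hf = 0 ↔ f = 0 := by
  refine ⟨fun h ↦ ?_, by rintro rfl; simp⟩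
  rw [← P.extEquivCohomologyClass.apply_eq_iff_eq, P.extEquivCohomologyClass_extMk,
    P.extEquivCohomologyClass_zero, CochainComplex.HomComplex.CohomologyClass.mk_eq_zero_iff,
    CochainComplex.HomComplex.Cocycle.toSingleMk_mem_coboundaries_iff _ _ _ _ _ 1 (by lia)] at h
  obtain ⟨g, hg⟩ := h
  have hzero : IsZero (P.cochainComplex.X 1) :=
    P.cochainComplex.isZero_of_isStrictlyLE 0 1 (by lia)
  rw [hzero.eq_of_src g 0, comp_zero] at hg
  rw [← cancel_epi (P.cochainComplexXIso (-(0 : ℕ)) 0 rfl).hom, comp_zero]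
  exact hg.symm

lemma extMk_eq_zero_iff_exists_d_comp (P : ProjectiveResolution X)
    (f : P.complex.X n ⟶ Y) (hf : P.complex.d (n + 1) n ≫ f = 0) :
    P.extMk f (n + 1) rfl hf = 0 ↔
      ∃ g : P.complex.X ((ComplexShape.down ℕ).next n) ⟶ Y, P.complex.d n _ ≫ g = f := by
  cases n with
  | succ p => rw [P.extMk_eq_zero_iff f _ rfl hf p rfl, ChainComplex.next_nat_succ]
  | zero => simp [extMk_zero_eq_zero_iff P f hf, @eq_comm _ 0 f]

end ExtMk

variable {A : Type*} [Ring A] {C : Type*} [Category* C] [Abelian C] [Linear A C]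
  [EnoughProjectives C] {X X' Y : C} {n : ℕ}

/-- `IsExtClass A P f z` says that the element `z` of the left derived functor `Ext A C n` is the
class of the cocycle `f`, for `P` a projective resolution of the first argument. It is the link
between that functor, in terms of which local cohomology is defined, and `Abelian.Ext`. Cocycles
are the elements of `opcycles`, as the derived functor is taken in the opposite category. -/
def IsExtClass (A : Type*) [Ring A] [Linear A C] (P : ProjectiveResolution X)
    (f : P.complex.X n ⟶ Y) (z : ((_root_.Ext A C n).obj (op X)).obj Y) : Prop :=
  let F := ((linearYoneda A C).obj Y).rightOp
  ∃ c : (((F.mapHomologicalComplex _).obj P.complex).opcycles n).unop,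
    (((F.mapHomologicalComplex _).obj P.complex).pOpcycles n).unop c = f ∧
      (leftDerivedι P F n).unop c = z

lemma exists_isExtClass (P : ProjectiveResolution X)
    (z : ((_root_.Ext A C n).obj (op X)).obj Y) :
    ∃ f : P.complex.X n ⟶ Y, P.complex.d (n + 1) n ≫ f = 0 ∧ IsExtClass A P f z := by
  let F := ((linearYoneda A C).obj Y).rightOp
  obtain ⟨c, hc⟩ := (ModuleCat.epi_iff_surjective (leftDerivedι P F n).unop).1 inferInstance z
  let K := (F.mapHomologicalComplex _).obj P.complex
  refine ⟨(K.pOpcycles n).unop c, ?_, c, rfl, hc⟩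
  exact congr(($(K.d_pOpcycles (n + 1) n)).unop c)

lemma exists_isExtClass_of_d_comp_eq_zero (P : ProjectiveResolution X)
    (f : P.complex.X n ⟶ Y) (hf : P.complex.d (n + 1) n ≫ f = 0) :
    ∃ z, IsExtClass A P f z := by
  let K := (((linearYoneda A C).obj Y).rightOp.mapHomologicalComplex _).obj P.complex
  have hK : (ShortComplex.mk (K.d (n + 1) n) (K.pOpcycles n) (by simp)).Exact :=
    ShortComplex.exact_of_g_is_cokernel _ (K.opcyclesIsCokernel (n + 1) n (by simp))
  obtain ⟨c, hc⟩ := (ShortComplex.moduleCat_exact_iff _).1 hK.unop f hf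
  exact ⟨_, c, hc, rfl⟩

namespace IsExtClass

lemma eq_zero_iff {P : ProjectiveResolution X} {f : P.complex.X n ⟶ Y}
    {z : ((_root_.Ext A C n).obj (op X)).obj Y} (h : IsExtClass A P f z) :
    z = 0 ↔ ∃ g : P.complex.X ((ComplexShape.down ℕ).next n) ⟶ Y, P.complex.d n _ ≫ g = f := by
  obtain ⟨c, rfl, rfl⟩ := h
  let F := ((linearYoneda A C).obj Y).rightOp
  let K := (F.mapHomologicalComplex _).obj P.complex
  let j := (ComplexShape.down ℕ).next n
  have hp (g : P.complex.X j ⟶ Y) :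
      (K.pOpcycles n).unop ((K.fromOpcycles n j).unop g) = P.complex.d n j ≫ g :=
    congr(($(K.p_fromOpcycles n j)).unop g)
  constructor
  · intro h
    obtain ⟨g, hg⟩ := (ShortComplex.moduleCat_exact_iff _).1 (leftDerivedι_exact P F n).unop c h
    exact ⟨g, (hp g).symm.trans congr((K.pOpcycles n).unop $hg)⟩
  · rintro ⟨g, hg⟩
    have hinj : Function.Injective (K.pOpcycles n).unop :=
      (ModuleCat.mono_iff_injective _).1 inferInstance
    obtain rfl : (K.fromOpcycles n j).unop g = c := hinj ((hp g).trans hg)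
    exact congr(($(leftDerivedι_comp_fromOpcycles P F n)).unop g)

lemma map {P : ProjectiveResolution X} {P' : ProjectiveResolution X'} {g : X' ⟶ X}
    (φ : ProjectiveResolution.Hom P' P g) {f : P.complex.X n ⟶ Y}
    {z : ((_root_.Ext A C n).obj (op X)).obj Y} (h : IsExtClass A P f z) :
    IsExtClass A P' (φ.hom.f n ≫ f) (((_root_.Ext A C n).map g.op).app Y z) := by
  obtain ⟨c, rfl, rfl⟩ := h
  let F := ((linearYoneda A C).obj Y).rightOp
  let ψ := (F.mapHomologicalComplex _).map φ.hom
  refine ⟨(HomologicalComplex.opcyclesMap ψ n).unop c, ?_, ?_⟩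
  · exact congr(($(HomologicalComplex.p_opcyclesMap ψ n)).unop c)
  · exact congr(($((leftDerivedι_naturality F n φ).symm)).unop c)

lemma map_eq_zero_iff [HasExt C] {P : ProjectiveResolution X} {f : P.complex.X n ⟶ Y}
    {z : ((_root_.Ext A C n).obj (op X)).obj Y} (h : IsExtClass A P f z)
    (hf : P.complex.d (n + 1) n ≫ f = 0) (g : X' ⟶ X) :
    ((_root_.Ext A C n).map g.op).app Y z = 0 ↔
      (Ext.mk₀ g).comp (P.extMk f (n + 1) rfl hf) (zero_add n) = 0 := by
  let P' := projectiveResolution X'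
  let φ : ProjectiveResolution.Hom P' P g :=
    ⟨ProjectiveResolution.lift g P' P,
      by simpa using! ProjectiveResolution.lift_commutes_zero g P' P⟩
  rw [ProjectiveResolution.mk₀_comp_extMk f (n + 1) rfl hf φ, extMk_eq_zero_iff_exists_d_comp,
    (h.map φ).eq_zero_iff]

end IsExtClass

end LeftDerivedExt

section Restriction

open Abelian

variable {A : Type u} [CommRing A] {I J K : Ideal A} {N N' : ModuleCat.{u} A} {n : ℕ}

/-- The projection `A ⧸ I ⟶ A ⧸ J`. -/
def quotientFactor (h : I ≤ J) : ModuleCat.of A (A ⧸ I) ⟶ ModuleCat.of A (A ⧸ J) :=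
  ModuleCat.ofHom (Submodule.factor h)

/-- Restriction of extension classes along `A ⧸ I ⟶ A ⧸ J`. For powers of an ideal these are the
transition maps of the direct system that defines local cohomology. -/
def restrictExt (h : I ≤ J) :
    Ext (ModuleCat.of A (A ⧸ J)) N n →ₗ[A] Ext (ModuleCat.of A (A ⧸ I)) N n :=
  (Ext.mk₀ (quotientFactor h)).precompOfLinear A N (zero_add n)

lemma restrictExt_apply (h : I ≤ J) (ξ : Ext (ModuleCat.of A (A ⧸ J)) N n) :
    restrictExt h ξ = (Ext.mk₀ (quotientFactor h)).comp ξ (zero_add n) := rfl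

lemma restrictExt_restrictExt (h : I ≤ J) (h' : J ≤ K) (ξ : Ext (ModuleCat.of A (A ⧸ K)) N n) :
    restrictExt h (restrictExt h' ξ) = restrictExt (h.trans h') ξ := by
  have hcomp : quotientFactor (h.trans h') = quotientFactor h ≫ quotientFactor h' := by
    ext; rfl
  simp only [restrictExt_apply, hcomp, Ext.mk₀_comp_mk₀_assoc]

lemma restrictExt_comp (h : I ≤ J) {m d : ℕ} (ξ : Ext (ModuleCat.of A (A ⧸ J)) N n)
    (β : Ext N N' m) (hd : n + m = d) :
    restrictExt h (ξ.comp β hd) = (restrictExt h ξ).comp β hd := by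
  rw [restrictExt_apply, restrictExt_apply, Ext.comp_assoc _ _ _ _ _ (by lia)]

lemma smul_ext_eq_zero_of_mem {s : A} (hs : s ∈ I) (ξ : Ext (ModuleCat.of A (A ⧸ I)) N n) :
    s • ξ = 0 := by
  have hid : s • 𝟙 (ModuleCat.of A (A ⧸ I)) = 0 := by
    ext
    exact (Submodule.Quotient.mk_eq_zero I).2 (I.mul_mem_right 1 hs)
  rw [← Ext.mk₀_id_comp ξ, ← Ext.smul_comp, ← Ext.mk₀_smul, hid, Ext.mk₀_zero, Ext.zero_comp]

lemma smul_ext_eq_zero_of_forall_smul_eq_zero {X : ModuleCat.{u} A} {s : A}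
    (hs : ∀ x : N, s • x = 0) (ξ : Ext X N n) : s • ξ = 0 := by
  have hid : s • 𝟙 N = 0 := by
    ext x
    exact hs x
  rw [Ext.smul_eq_comp_mk₀, hid, Ext.mk₀_zero, Ext.comp_zero]

end Restriction

section LocalCohomology

open Limits Opposite Abelian

variable {A : Type u} [CommRing A] {a : Ideal A} {N N' : ModuleCat.{u} A} {k l n : ℕ}

/-- The kernel of the canonical map `Ext^n(A ⧸ a ^ k, N) → H^n_a(N)`: the classes that die in the
direct system `(Ext^n(A ⧸ a ^ l, N))_l`. -/
def colimitKernel (a : Ideal A) (N : ModuleCat.{u} A) (n k : ℕ) :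
    Submodule A (Ext (ModuleCat.of A (A ⧸ a ^ k)) N n) where
  carrier := {ξ | ∃ (l : ℕ) (h : a ^ l ≤ a ^ k), restrictExt h ξ = 0}
  zero_mem' := ⟨k, le_rfl, map_zero _⟩
  add_mem' := by
    rintro ξ η ⟨l, hl, hξ⟩ ⟨m, hm, hη⟩
    have hl' : a ^ (l + m) ≤ a ^ l := Ideal.pow_le_pow_right (Nat.le_add_right l m)
    have hm' : a ^ (l + m) ≤ a ^ m := Ideal.pow_le_pow_right (Nat.le_add_left m l)
    refine ⟨l + m, hl'.trans hl, ?_⟩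
    rw [map_add, ← restrictExt_restrictExt hl' hl, ← restrictExt_restrictExt hm' hm, hξ, hη,
      map_zero, map_zero, add_zero]
  smul_mem' := by
    rintro s ξ ⟨l, hl, hξ⟩
    exact ⟨l, hl, by rw [map_smul, hξ, smul_zero]⟩

lemma mem_colimitKernel_of_restrictExt_mem (h : a ^ l ≤ a ^ k)
    {ξ : Ext (ModuleCat.of A (A ⧸ a ^ k)) N n} (hξ : restrictExt h ξ ∈ colimitKernel a N n l) :
    ξ ∈ colimitKernel a N n k := by
  obtain ⟨m, hm, hξ⟩ := hξ
  exact ⟨m, hm.trans h, by rw [← restrictExt_restrictExt hm h, hξ]⟩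

lemma comp_mem_colimitKernel {m d : ℕ} {ξ : Ext (ModuleCat.of A (A ⧸ a ^ k)) N n}
    (hξ : ξ ∈ colimitKernel a N n k) (β : Ext N N' m) (hd : n + m = d) :
    ξ.comp β hd ∈ colimitKernel a N' d k := by
  obtain ⟨l, hl, hξ⟩ := hξ
  exact ⟨l, hl, by rw [restrictExt_comp, hξ, Ext.zero_comp]⟩

lemma subsingleton_colimit_iff {J : Type} [SmallCategory J] [IsFiltered J]
    (F : J ⥤ ModuleCat.{u} A) :
    Subsingleton (colimit F : ModuleCat.{u} A) ↔
      ∀ (j : J) (x : F.obj j), ∃ (j' : J) (i : j ⟶ j'), F.map i x = 0 := by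
  have : PreservesFilteredColimitsOfSize.{0, 0} (forget (ModuleCat.{u} A)) :=
    preservesFilteredColimitsOfSize_shrink.{0, u, 0, u} _
  refine ⟨fun _ j x ↦ Concrete.colimit_rep_eq_zero (R := A) F j x (Subsingleton.elim _ _),
    fun h ↦ subsingleton_of_forall_eq 0 fun z ↦ ?_⟩
  obtain ⟨j, x, rfl⟩ := Concrete.colimit_exists_rep F z
  obtain ⟨j', i, hi⟩ := h j x
  rw [← colimit.w F i, ConcreteCategory.comp_apply, hi, map_zero]

lemma subsingleton_localCohomology_iff_exists_map_eq_zero :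
    Subsingleton ((localCohomology a n).obj N) ↔
      ∀ (k : ℕ) (z : ((_root_.Ext A (ModuleCat.{u} A) n).obj
          (op (ModuleCat.of A (A ⧸ a ^ k)))).obj N), ∃ (l : ℕ) (h : k ≤ l),
        ((_root_.Ext A _ n).map (quotientFactor (Ideal.pow_le_pow_right h)).op).app N z = 0 := by
  let D := localCohomology.diagram (localCohomology.idealPowersDiagram a) n
  let e : (localCohomology a n).obj N ≅ colimit (D ⋙ (evaluation _ _).obj N) :=
    colimitObjIsoColimitCompEvaluation D N
  rw [e.toLinearEquiv.toEquiv.subsingleton_congr, subsingleton_colimit_iff]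
  refine ⟨fun h k z ↦ ?_, fun h ⟨⟨k⟩⟩ z ↦ ?_⟩
  · obtain ⟨⟨⟨l⟩⟩, i, hi⟩ := h (op (op k)) z
    exact ⟨l, leOfHom i.unop.unop, hi⟩
  · obtain ⟨l, hl, hz⟩ := h k z
    exact ⟨op (op l), (homOfLE hl).op.op, hz⟩

theorem subsingleton_localCohomology_iff :
    Subsingleton ((localCohomology a n).obj N) ↔ ∀ k, colimitKernel a N n k = ⊤ := by
  simp only [subsingleton_localCohomology_iff_exists_map_eq_zero, Submodule.eq_top_iff']
  let P (k : ℕ) := projectiveResolution (ModuleCat.of A (A ⧸ a ^ k))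
  refine ⟨fun h k ξ ↦ ?_, fun h k z ↦ ?_⟩
  · obtain ⟨f, hf, rfl⟩ := (P k).extMk_surjective ξ (n + 1) rfl
    obtain ⟨z, hz⟩ := exists_isExtClass_of_d_comp_eq_zero (A := A) (P k) f hf
    obtain ⟨l, hl, h0⟩ := h k z
    exact ⟨l, Ideal.pow_le_pow_right hl, (hz.map_eq_zero_iff hf _).1 h0⟩
  · obtain ⟨f, hf, hz⟩ := exists_isExtClass (P k) z
    obtain ⟨l, hl, h0⟩ := h k ((P k).extMk f (n + 1) rfl hf)
    refine ⟨k + l, Nat.le_add_right k l, (hz.map_eq_zero_iff hf _).2 ?_⟩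
    rw [← restrictExt_apply, ← restrictExt_restrictExt
      (Ideal.pow_le_pow_right (Nat.le_add_left l k)) hl, h0, map_zero]

lemma subsingleton_localCohomology_top (N : ModuleCat.{u} A) (n : ℕ) :
    Subsingleton ((localCohomology (⊤ : Ideal A) n).obj N) := by
  refine subsingleton_localCohomology_iff.2 fun k ↦ Submodule.eq_top_iff'.2 fun ξ ↦ ?_
  have hξ : (1 : A) • ξ = 0 := smul_ext_eq_zero_of_mem (by simp [Ideal.top_pow]) ξ
  rw [← one_smul A ξ, hξ]
  exact zero_mem _

end LocalCohomology

section InjectiveModules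

variable {A : Type*} [CommRing A] {E : Type*} [AddCommGroup E] [Module A E]

lemma exists_linearMap_comp_eq_of_ker_le {P Q : Type*} [AddCommGroup P] [Module A P]
    [AddCommGroup Q] [Module A Q] (hE : Module.Baer A E) (φ : P →ₗ[A] Q) (f : P →ₗ[A] E)
    (h : LinearMap.ker φ ≤ LinearMap.ker f) : ∃ g : Q →ₗ[A] E, g ∘ₗ φ = f := by
  have hφ : Function.Injective ((LinearMap.ker φ).liftQ φ le_rfl) := by
    rw [← LinearMap.ker_eq_bot, Submodule.ker_liftQ_eq_bot _ _ _ le_rfl]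
  obtain ⟨g, hg⟩ := hE.extension_property _ hφ ((LinearMap.ker φ).liftQ f h)
  refine ⟨g, ?_⟩
  rw [← (LinearMap.ker φ).liftQ_mkQ φ le_rfl, ← LinearMap.comp_assoc, hg, Submodule.liftQ_mkQ]

variable [IsNoetherianRing A]

-- For `m` large `ker (y ^ (m + c)) = ker (y ^ m)` on `A`, so `y ^ (m + c) ↦ y ^ m • v` is a well
-- defined map on the ideal generated by `y ^ (m + c)`, which extends to `A`.
lemma exists_forall_exists_pow_add_smul_eq (hE : Module.Baer A E) (y : A) :
    ∃ m : ℕ, ∀ (c : ℕ) (v : E), ∃ v' : E, y ^ (m + c) • v' = y ^ m • v := by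
  obtain ⟨m, hm⟩ := monotone_stabilizes_iff_noetherian.2 (inferInstance : IsNoetherian A A)
    (LinearMap.mulLeft A y).iterateKer
  refine ⟨m, fun c v ↦ ?_⟩
  have hker : LinearMap.ker (LinearMap.mulLeft A (y ^ (m + c))) ≤
      LinearMap.ker (LinearMap.toSpanSingleton A E (y ^ m • v)) := by
    intro r hr
    rw [← LinearMap.pow_mulLeft] at hr
    have hrm : y ^ m * r = 0 := by
      simpa [LinearMap.pow_mulLeft] using! (hm (m + c) (Nat.le_add_right m c)).ge hr
    rw [LinearMap.mem_ker, LinearMap.toSpanSingleton_apply, smul_smul, mul_comm, hrm, zero_smul]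
  obtain ⟨g, hg⟩ := exists_linearMap_comp_eq_of_ker_le hE _ _ hker
  refine ⟨g 1, ?_⟩
  simpa [← map_smul] using congr($hg 1)

end InjectiveModules

section PowerTorsion

open Ideal

variable {A : Type*} [CommRing A] {a I : Ideal A} {E : Type*} [AddCommGroup E] [Module A E]

lemma mem_primaryComponent_iff {x : E} :
    x ∈ primaryComponent E a ↔ ∃ k : ℕ, ∀ r ∈ a ^ k, r • x = 0 := by
  simp [primaryComponent_mem]

lemma primaryComponent_primaryComponent_eq_top :
    primaryComponent (primaryComponent E a) a = ⊤ := by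
  rw [Submodule.eq_top_iff']
  rintro ⟨x, hx⟩
  obtain ⟨k, hk⟩ := mem_primaryComponent_iff.1 hx
  exact mem_primaryComponent_iff.2 ⟨k, fun r hr ↦ Subtype.ext (hk r hr)⟩

lemma primaryComponent_eq_top_of_surjective {E' : Type*} [AddCommGroup E'] [Module A E']
    (hE : primaryComponent E a = ⊤) {g : E →ₗ[A] E'} (hg : Function.Surjective g) :
    primaryComponent E' a = ⊤ := by
  rw [Submodule.eq_top_iff']
  intro x
  obtain ⟨x, rfl⟩ := hg x
  exact primaryComponent_map_mem a g ⟨x, hE ▸ Submodule.mem_top⟩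

lemma smul_eq_zero_of_mem_sup_span_singleton_pow {y : A} {k c : ℕ} {x : E}
    (hx : ∀ r ∈ a ^ k, r • x = 0) (hy : y ^ c • x = 0) :
    ∀ r ∈ (a ⊔ span {y}) ^ (k + c), r • x = 0 := by
  intro r hr
  have hr' := sup_pow_add_le_pow_sup_pow hr
  rw [span_singleton_pow] at hr'
  obtain ⟨s, hs, t, ht, rfl⟩ := Submodule.mem_sup.1 hr'
  obtain ⟨z, rfl⟩ := mem_span_singleton'.1 ht
  rw [add_smul, hx s hs, mul_smul, hy, smul_zero, add_zero]

lemma exists_pow_smul_eq_zero_of_primaryComponent_eq_top {F : Type*} [AddCommGroup F] [Module A F]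
    [IsNoetherian A F] (hE : primaryComponent E a = ⊤) (f : F →ₗ[A] E) :
    ∃ c : ℕ, ∀ r ∈ a ^ c, ∀ x : F, r • f x = 0 := by
  let T : ℕ →o Submodule A F :=
    ⟨fun c ↦ (Submodule.torsionBySet A E (a ^ c : Ideal A)).comap f, fun i j hij ↦
      Submodule.comap_mono (Submodule.torsionBySet_le_torsionBySet_pow i j hij a)⟩
  have hT {c : ℕ} {x : F} : x ∈ T c ↔ ∀ r ∈ a ^ c, r • f x = 0 :=
    (Submodule.mem_torsionBySet_iff _ (f x)).trans Subtype.forall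
  obtain ⟨c, hc⟩ := monotone_stabilizes_iff_noetherian.2 ‹IsNoetherian A F› T
  refine ⟨c, fun r hr x ↦ ?_⟩
  obtain ⟨d, hd⟩ := mem_primaryComponent_iff.1 (hE ▸ Submodule.mem_top : f x ∈ primaryComponent E a)
  have hx : x ∈ T (c + d) := T.monotone (Nat.le_add_left d c) (hT.2 hd)
  exact hT.1 ((hc (c + d) (Nat.le_add_right c d)).ge hx) r hr

variable [IsNoetherianRing A]

lemma exists_pow_inf_le_map_ker (hE : primaryComponent E a = ⊤) (f : I →ₗ[A] E) :
    ∃ k : ℕ, a ^ k ⊓ I ≤ (LinearMap.ker f).map I.subtype := by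
  obtain ⟨c, hc⟩ := exists_pow_smul_eq_zero_of_primaryComponent_eq_top hE f
  obtain ⟨k, hk⟩ := exists_pow_inf_eq_pow_smul a I
  have hAR : a ^ (k + c) ⊓ I = a ^ c • (a ^ k • ⊤ ⊓ I) := by
    simpa using hk (k + c) (Nat.le_add_right k c)
  refine ⟨k + c, ?_⟩
  rw [hAR, Submodule.smul_le]
  intro r hr x hx
  exact ⟨r • ⟨x, hx.2⟩, (map_smul f r _).trans (hc r hr _), rfl⟩

-- By Artin–Rees a map `I → Γ_a(E)` vanishes on some `a ^ k ⊓ I`, so it extends to a map on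
-- `A ⧸ a ^ k`, whose values are automatically in `Γ_a(E)`.
theorem baer_primaryComponent (a : Ideal A) (hE : Module.Baer A E) :
    Module.Baer A (primaryComponent E a) := by
  intro I f
  obtain ⟨k, hk⟩ := exists_pow_inf_le_map_ker primaryComponent_primaryComponent_eq_top f
  have hker : LinearMap.ker ((a ^ k).mkQ ∘ₗ I.subtype) ≤
      LinearMap.ker ((primaryComponent E a).subtype ∘ₗ f) := by
    intro x hx
    have hxk : (x : A) ∈ a ^ k := (Submodule.Quotient.mk_eq_zero _).1 hx
    obtain ⟨z, hz, hzx⟩ := hk ⟨hxk, x.2⟩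
    obtain rfl : z = x := Subtype.ext hzx
    exact congr(($hz : E))
  obtain ⟨g, hg⟩ := exists_linearMap_comp_eq_of_ker_le hE _ _ hker
  have hmem (x : A) : g ((a ^ k).mkQ x) ∈ primaryComponent E a := by
    refine mem_primaryComponent_iff.2 ⟨k, fun r hr ↦ ?_⟩
    rw [← map_smul, ← map_smul, Submodule.mkQ_apply,
      (Submodule.Quotient.mk_eq_zero _ (x := r • x)).2 (mul_mem_right x _ hr), map_zero]
  exact ⟨(g ∘ₗ (a ^ k).mkQ).codRestrict _ hmem, fun x hx ↦ Subtype.ext congr($hg ⟨x, hx⟩)⟩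

end PowerTorsion

section QuotientHom

variable {A : Type u} [CommRing A] {I : Ideal A} {N : ModuleCat.{u} A}

/-- The morphism `A ⧸ I ⟶ N` sending `1` to an element `u` killed by `I`. -/
def quotientHom (u : N) (hu : ∀ r ∈ I, r • u = 0) : ModuleCat.of A (A ⧸ I) ⟶ N :=
  ModuleCat.ofHom (Submodule.liftQ I (LinearMap.toSpanSingleton A N u) hu)

lemma quotientHom_one (u : N) (hu : ∀ r ∈ I, r • u = 0) : quotientHom u hu (1 : A ⧸ I) = u :=
  one_smul A u

lemma quotient_hom_ext {f g : ModuleCat.of A (A ⧸ I) ⟶ N} (h : f (1 : A ⧸ I) = g (1 : A ⧸ I)) :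
    f = g := by
  ext
  exact h

lemma smul_hom_one_eq_zero (f : ModuleCat.of A (A ⧸ I) ⟶ N) {r : A} (hr : r ∈ I) :
    r • f (1 : A ⧸ I) = 0 := by
  have hr1 : r • (1 : A ⧸ I) = 0 := (Submodule.Quotient.mk_eq_zero I).2 (I.mul_mem_right 1 hr)
  exact (map_smul f.hom r _).symm.trans ((congrArg f hr1).trans (map_zero f.hom))

end QuotientHom

section TorsionVanishing

open Limits Abelian Ideal

variable {A : Type u} [CommRing A] {a : Ideal A} {N : ModuleCat.{u} A}

lemma baer_of_injective (E : ModuleCat.{u} A) [Injective E] : Module.Baer A E :=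
  .of_injective (Module.injective_module_of_injective_object A E)

lemma exists_shortExact_of_primaryComponent_eq_top [IsNoetherianRing A]
    (hN : primaryComponent N a = ⊤) :
    ∃ (E Q : ModuleCat.{u} A) (f : N ⟶ E) (g : E ⟶ Q) (w : f ≫ g = 0),
      (ShortComplex.mk f g w).ShortExact ∧ Injective E ∧ primaryComponent E a = ⊤ := by
  let J := Injective.under N
  have hbaer : Module.Baer A (primaryComponent J a) :=
    baer_primaryComponent a (baer_of_injective J)
  have : Module.Injective A (primaryComponent J a) := hbaer.injective
  have hι (x : N) : Injective.ι N x ∈ primaryComponent J a :=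
    primaryComponent_map_mem a (Injective.ι N).hom ⟨x, hN ▸ Submodule.mem_top⟩
  let f : N ⟶ ModuleCat.of A (primaryComponent J a) :=
    ModuleCat.ofHom ((Injective.ι N).hom.codRestrict _ hι)
  have hf : Mono f := by
    rw [ModuleCat.mono_iff_injective]
    exact fun x y hxy ↦ (ModuleCat.mono_iff_injective (Injective.ι N)).1 inferInstance
      congr(($hxy : J))
  exact ⟨_, cokernel f, f, cokernel.π f, cokernel.condition f,
    ⟨ShortComplex.exact_cokernel f⟩, Module.injective_object_of_injective_module A _,
    primaryComponent_primaryComponent_eq_top⟩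

lemma mk₀_comp_extClass_mem_colimitKernel {S : ShortComplex (ModuleCat.{u} A)} (hS : S.ShortExact)
    (hS₂ : primaryComponent S.X₂ a = ⊤) {k : ℕ} (f : ModuleCat.of A (A ⧸ a ^ k) ⟶ S.X₃) :
    (Ext.mk₀ f).comp hS.extClass (zero_add 1) ∈ colimitKernel a S.X₁ 1 k := by
  obtain ⟨e, he⟩ := (ModuleCat.epi_iff_surjective S.g).1 hS.epi_g (f (1 : A ⧸ a ^ k))
  obtain ⟨l, hl⟩ := mem_primaryComponent_iff.1 (hS₂ ▸ Submodule.mem_top : e ∈ primaryComponent _ a)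
  have hk : a ^ (k + l) ≤ a ^ k := pow_le_pow_right (Nat.le_add_right k l)
  have hl' : a ^ (k + l) ≤ a ^ l := pow_le_pow_right (Nat.le_add_left l k)
  have hfactor : quotientFactor hk ≫ f = quotientHom e (fun r hr ↦ hl r (hl' hr)) ≫ S.g := by
    refine quotient_hom_ext ?_
    rw [ConcreteCategory.comp_apply, ConcreteCategory.comp_apply, quotientHom_one, he]
    rfl
  refine ⟨k + l, hk, ?_⟩
  rw [restrictExt_apply, Ext.mk₀_comp_mk₀_assoc, hfactor, ← Ext.mk₀_comp_mk₀_assoc,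
    hS.comp_extClass, Ext.comp_zero]

theorem colimitKernel_eq_top_of_primaryComponent_eq_top [IsNoetherianRing A]
    (hN : primaryComponent N a = ⊤) (n k : ℕ) : colimitKernel a N (n + 1) k = ⊤ := by
  induction n generalizing N with
  | zero =>
    rw [Submodule.eq_top_iff']
    intro ξ
    obtain ⟨E, Q, f, g, w, hS, _, hE⟩ := exists_shortExact_of_primaryComponent_eq_top hN
    obtain ⟨η, rfl⟩ := Ext.covariant_sequence_exact₁ _ hS ξ (Ext.eq_zero_of_injective _) rfl
    obtain ⟨h, rfl⟩ := (Ext.mk₀_bijective _ _).2 η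
    exact mk₀_comp_extClass_mem_colimitKernel hS hE h
  | succ n ih =>
    rw [Submodule.eq_top_iff']
    intro ξ
    obtain ⟨E, Q, f, g, w, hS, _, hE⟩ := exists_shortExact_of_primaryComponent_eq_top hN
    obtain ⟨η, rfl⟩ := Ext.covariant_sequence_exact₁ _ hS ξ (Ext.eq_zero_of_injective _) rfl
    have hg : Function.Surjective g := (ModuleCat.epi_iff_surjective g).1 hS.epi_g
    have hQ : primaryComponent Q a = ⊤ := primaryComponent_eq_top_of_surjective hE (g := g.hom) hg
    exact comp_mem_colimitKernel (by simp [ih hQ]) _ _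

end TorsionVanishing

section InjectiveExtMk

open Limits Abelian

variable {C : Type*} [Category* C] [Abelian C] [HasExt C] {X Y : C} {n : ℕ}

lemma injectiveResolution_extMk_zero_eq_zero_iff (J : InjectiveResolution Y)
    (f : X ⟶ J.cocomplex.X 0) (hf : f ≫ J.cocomplex.d 0 1 = 0) :
    J.extMk f 1 rfl hf = 0 ↔ f = 0 := by
  refine ⟨fun h ↦ ?_, by rintro rfl; simp⟩
  rw [← J.extEquivCohomologyClass.apply_eq_iff_eq, J.extEquivCohomologyClass_extMk,
    J.extEquivCohomologyClass_zero, CochainComplex.HomComplex.CohomologyClass.mk_eq_zero_iff,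
    CochainComplex.HomComplex.Cocycle.fromSingleMk_mem_coboundaries_iff _ _ _ _ _ (-1)
      (by lia)] at h
  obtain ⟨g, hg⟩ := h
  have hzero : IsZero (J.cochainComplex.X (-1)) :=
    J.cochainComplex.isZero_of_isStrictlyGE 0 (-1) (by lia)
  rw [hzero.eq_of_tgt g 0, zero_comp] at hg
  rw [← cancel_mono (J.cochainComplexXIso 0 0 rfl).inv, zero_comp]
  exact hg.symm

lemma extMk_eq_zero_iff_exists_comp_d (J : InjectiveResolution Y)
    (f : X ⟶ J.cocomplex.X n) (hf : f ≫ J.cocomplex.d n (n + 1) = 0) :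
    J.extMk f (n + 1) rfl hf = 0 ↔
      ∃ g : X ⟶ J.cocomplex.X ((ComplexShape.up ℕ).prev n), g ≫ J.cocomplex.d _ n = f := by
  cases n with
  | succ p => rw [J.extMk_eq_zero_iff f _ rfl hf p rfl, CochainComplex.prev_nat_succ]
  | zero => simp [injectiveResolution_extMk_zero_eq_zero_iff J f hf, @eq_comm _ 0 f]

lemma smul_extMk {A : Type*} [Ring A] [Linear A C] (J : InjectiveResolution Y)
    (f : X ⟶ J.cocomplex.X n) (hf : f ≫ J.cocomplex.d n (n + 1) = 0) (r : A) :
    r • J.extMk f (n + 1) rfl hf = J.extMk (r • f) (n + 1) rfl (by simp [hf]) := by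
  rw [← Ext.mk₀_id_comp (J.extMk f (n + 1) rfl hf), ← Ext.smul_comp, ← Ext.mk₀_smul,
    J.mk₀_comp_extMk]
  simp only [Linear.smul_comp, Category.id_comp]

end InjectiveExtMk

section Lifting

open Abelian Ideal

variable {A : Type u} [CommRing A] [IsNoetherianRing A] {a : Ideal A} {N : ModuleCat.{u} A}
  {k n : ℕ}

lemma exists_primaryComponent_pow_smul_eq {E : ModuleCat.{u} A} [Injective E] {v : E}
    (hv : ∀ r ∈ a ^ k, r • v = 0) (y : A) (c : ℕ) :
    ∃ (l m : ℕ) (v' : E), (∀ r ∈ a ^ l, r • v' = 0) ∧ y ^ (m + c) • v' = y ^ m • v := by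
  obtain ⟨m, hm⟩ := exists_forall_exists_pow_add_smul_eq
    (baer_primaryComponent a (baer_of_injective E)) y
  obtain ⟨⟨v', hv'⟩, hvv'⟩ := hm c ⟨v, mem_primaryComponent_iff.2 ⟨k, hv⟩⟩
  obtain ⟨l, hl⟩ := mem_primaryComponent_iff.1 hv'
  exact ⟨l, m, v', hl, congr(($hvv' : E))⟩

-- A cocycle `f` with `y ^ c • f = g ≫ d` is corrected by the coboundary of `v'`, where
-- `y ^ (m + c) • v' = y ^ m • g 1`, to an element killed by a power of `y`.
lemma exists_boundary_pow_smul_sub_eq_zero (J : InjectiveResolution N)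
    (f : ModuleCat.of A (A ⧸ a ^ k) ⟶ J.cocomplex.X n)
    (hf : f ≫ J.cocomplex.d n (n + 1) = 0) {y : A} {c : ℕ}
    (h : y ^ c • J.extMk f (n + 1) rfl hf = 0) :
    ∃ (l m : ℕ) (v : J.cocomplex.X ((ComplexShape.up ℕ).prev n)),
      (∀ r ∈ a ^ l, r • v = 0) ∧ y ^ m • (f (1 : A ⧸ a ^ k) - J.cocomplex.d _ n v) = 0 := by
  rw [smul_extMk, extMk_eq_zero_iff_exists_comp_d] at h
  obtain ⟨g, hg⟩ := h
  have hg1 : J.cocomplex.d _ n (g (1 : A ⧸ a ^ k)) = y ^ c • f (1 : A ⧸ a ^ k) :=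
    congr($hg (1 : A ⧸ a ^ k))
  have := J.injective ((ComplexShape.up ℕ).prev n)
  obtain ⟨l, m, v, hv, hvg⟩ := exists_primaryComponent_pow_smul_eq
    (v := g (1 : A ⧸ a ^ k)) (fun r hr ↦ smul_hom_one_eq_zero g hr) y c
  refine ⟨l, m + c, v, hv, ?_⟩
  rw [smul_sub, ← map_smul (J.cocomplex.d _ n).hom, hvg, map_smul, hg1, smul_smul, pow_add,
    sub_self]

theorem exists_restrictExt_eq_of_pow_smul_eq_zero {y : A} {c : ℕ}
    {ξ : Ext (ModuleCat.of A (A ⧸ a ^ k)) N n} (h : y ^ c • ξ = 0) :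
    ∃ (l : ℕ) (ζ : Ext (ModuleCat.of A (A ⧸ (a ⊔ span {y}) ^ l)) N n) (hl : a ^ l ≤ a ^ k),
      restrictExt (pow_right_mono le_sup_left l) ζ = restrictExt hl ξ := by
  let J := injectiveResolution N
  obtain ⟨f, hf, rfl⟩ := J.extMk_surjective ξ (n + 1) rfl
  obtain ⟨j, m, v, hv, hm⟩ := exists_boundary_pow_smul_sub_eq_zero J f hf h
  let L := k + j + m
  have hk : a ^ L ≤ a ^ k := pow_le_pow_right (by lia)
  have hj : a ^ L ≤ a ^ j := pow_le_pow_right (by lia)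
  let u := f (1 : A ⧸ a ^ k) - J.cocomplex.d _ n v
  have hdv : ∀ r ∈ a ^ j, r • J.cocomplex.d _ n v = 0 := fun r hr ↦ by
    rw [← map_smul, hv r hr, map_zero]
  have hu : ∀ r ∈ a ^ (k + j), r • u = 0 := fun r hr ↦ by
    rw [smul_sub, hdv r (pow_le_pow_right (Nat.le_add_left j k) hr),
      smul_hom_one_eq_zero f (pow_le_pow_right (Nat.le_add_right k j) hr), sub_zero]
  let φ : ModuleCat.of A (A ⧸ (a ⊔ span {y}) ^ L) ⟶ J.cocomplex.X n :=
    quotientHom u (smul_eq_zero_of_mem_sup_span_singleton_pow hu hm)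
  have hφ : φ ≫ J.cocomplex.d n (n + 1) = 0 := quotient_hom_ext <| by
    rw [ConcreteCategory.comp_apply, quotientHom_one, map_sub, ← ConcreteCategory.comp_apply,
      ← ConcreteCategory.comp_apply, hf, J.cocomplex.d_comp_d]
    exact sub_zero _
  refine ⟨L, J.extMk φ (n + 1) rfl hφ, hk, ?_⟩
  rw [eq_comm, ← sub_eq_zero, restrictExt_apply, restrictExt_apply, J.mk₀_comp_extMk,
    J.mk₀_comp_extMk, J.sub_extMk, extMk_eq_zero_iff_exists_comp_d]
  refine ⟨quotientHom v fun r hr ↦ hv r (hj hr), quotient_hom_ext ?_⟩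
  have hφ1 : φ (1 : A ⧸ (a ⊔ span {y}) ^ L) = u := quotientHom_one u _
  calc J.cocomplex.d _ n (quotientHom v (fun r hr ↦ hv r (hj hr)) (1 : A ⧸ a ^ L))
      = f (1 : A ⧸ a ^ k) - u := by rw [quotientHom_one, sub_sub_cancel]
    _ = f (1 : A ⧸ a ^ k) - φ (1 : A ⧸ (a ⊔ span {y}) ^ L) := by rw [hφ1]

end Lifting

section SupportDimAt

open Order

lemma krullDim_add_one_le_of_lt_forall {α : Type*} [Preorder α] {s t : Set α} (hst : s ⊆ t)
    (hs : s.Nonempty) {x : α} (hx : x ∈ t) (hlt : ∀ y ∈ s, x < y) :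
    krullDim s + 1 ≤ krullDim t := by
  have := hs.to_subtype
  rw [← krullDim_withBot]
  let f : WithBot s → t := WithBot.recBotCoe ⟨x, hx⟩ (Set.inclusion hst)
  exact krullDim_le_of_strictMono f (WithBot.strictMono_iff.2 ⟨fun _ _ h ↦ h, fun y ↦ hlt y y.2⟩)

lemma krullDim_add_one_le_of_forall_lt {α : Type*} [Preorder α] {s t : Set α} (hst : s ⊆ t)
    (hs : s.Nonempty) {x : α} (hx : x ∈ t) (hlt : ∀ y ∈ s, y < x) :
    krullDim s + 1 ≤ krullDim t := by
  have := hs.to_subtype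
  rw [← krullDim_WithTop]
  let f : WithTop s → t := WithTop.recTopCoe ⟨x, hx⟩ (Set.inclusion hst)
  exact krullDim_le_of_strictMono f (WithTop.strictMono_iff.2 ⟨fun _ _ h ↦ h, fun y ↦ hlt y y.2⟩)

variable {A : Type*} [CommRing A] {N N' : Type*} [AddCommGroup N] [Module A N]
  [AddCommGroup N'] [Module A N'] {p q : PrimeSpectrum A}

/-- The Krull dimension of the localization `N_q`, computed as the dimension of the part of the
support of `N` below `q`; it is `⊥` when `q` is not in the support. -/
def supportDimAt (A : Type*) [CommRing A] (N : Type*) [AddCommGroup N] [Module A N]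
    (q : PrimeSpectrum A) : WithBot ℕ∞ :=
  krullDim (Module.support A N ∩ Set.Iic q : Set (PrimeSpectrum A))

lemma supportDimAt_mono (h : Module.support A N ⊆ Module.support A N') :
    supportDimAt A N q ≤ supportDimAt A N' q :=
  krullDim_le_of_strictMono (Set.inclusion (Set.inter_subset_inter_left _ h)) fun _ _ h ↦ h

lemma supportDimAt_nonneg (hq : q ∈ Module.support A N) : 0 ≤ supportDimAt A N q :=
  krullDim_nonneg_iff.2 ⟨q, hq, Set.self_mem_Iic⟩

lemma mem_support_of_coe_le_supportDimAt {n : ℕ} (h : n ≤ supportDimAt A N q) :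
    q ∈ Module.support A N := by
  obtain ⟨c, -⟩ := le_krullDim_iff.1 h
  exact Module.mem_support_mono c.head.2.2 c.head.2.1

lemma supportDimAt_add_one_le (hq : q ∈ Module.support A N') (hp : p ∈ Module.support A N)
    (hlt : ∀ p' ∈ Module.support A N', p < p') :
    supportDimAt A N' q + 1 ≤ supportDimAt A N q :=
  krullDim_add_one_le_of_lt_forall
    (fun p' hp' ↦ ⟨Module.mem_support_mono (hlt p' hp'.1).le hp, hp'.2⟩)
    ⟨q, hq, Set.self_mem_Iic⟩ ⟨hp, (hlt q hq).le⟩ fun p' hp' ↦ hlt p' hp'.1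

lemma supportDimAt_add_one_le_supportDim (hq : q ∈ Module.support A N) (hqp : q < p) :
    supportDimAt A N q + 1 ≤ Module.supportDim A N :=
  krullDim_add_one_le_of_forall_lt Set.inter_subset_left ⟨q, hq, Set.self_mem_Iic⟩
    (Module.mem_support_mono hqp.le hq) fun _ hp' ↦ hp'.2.trans_lt hqp

end SupportDimAt

section LocalVanishing

open Abelian Ideal

variable {A : Type u} [CommRing A] {a : Ideal A} {N N' : ModuleCat.{u} A} {k n : ℕ}
  {q : PrimeSpectrum A}

lemma colon_colimitKernel_le_colon_comp {m d : ℕ} (ξ : Ext (ModuleCat.of A (A ⧸ a ^ k)) N n)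
    (β : Ext N N' m) (hd : n + m = d) :
    (colimitKernel a N n k).colon {ξ} ≤ (colimitKernel a N' d k).colon {ξ.comp β hd} := by
  intro s hs
  rw [Submodule.mem_colon_singleton, ← Ext.smul_comp]
  exact comp_mem_colimitKernel (Submodule.mem_colon_singleton.1 hs) β hd

lemma mem_support_of_colon_colimitKernel_le [Module.Finite A N]
    {ξ : Ext (ModuleCat.of A (A ⧸ a ^ k)) N n}
    (hξ : (colimitKernel a N n k).colon {ξ} ≤ q.asIdeal) : q ∈ Module.support A N := by
  rw [Module.mem_support_iff_of_finite]
  intro s hs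
  refine hξ (Submodule.mem_colon_singleton.2 ?_)
  rw [smul_ext_eq_zero_of_forall_smul_eq_zero (Module.mem_annihilator.1 hs)]
  exact zero_mem _

lemma exists_colon_colimitKernel_quotSMulTop_le {r : A} (hr : r ∈ a ^ k)
    (hreg : IsSMulRegular N r) (ξ : Ext (ModuleCat.of A (A ⧸ a ^ k)) N (n + 1)) :
    ∃ η : Ext (ModuleCat.of A (A ⧸ a ^ k)) (ModuleCat.of A (QuotSMulTop r N)) n,
      (colimitKernel a _ n k).colon {η} ≤ (colimitKernel a N (n + 1) k).colon {ξ} := by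
  have hS := hreg.smulShortComplex_shortExact
  have hrξ : ξ.comp (Ext.mk₀ (N.smulShortComplex r).f) (add_zero _) = 0 :=
    (Ext.smul_eq_comp_mk₀ ξ r).symm.trans (smul_ext_eq_zero_of_mem hr ξ)
  obtain ⟨η, rfl⟩ := Ext.covariant_sequence_exact₁ _ hS ξ hrξ rfl
  exact ⟨η, colon_colimitKernel_le_colon_comp η hS.extClass rfl⟩

lemma colon_colimitKernel_le_or_exists {S : ShortComplex (ModuleCat.{u} A)} (hS : S.ShortExact)
    {ξ : Ext (ModuleCat.of A (A ⧸ a ^ k)) S.X₂ n}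
    (hξ : (colimitKernel a S.X₂ n k).colon {ξ} ≤ q.asIdeal) :
    (colimitKernel a S.X₃ n k).colon {ξ.comp (Ext.mk₀ S.g) (add_zero n)} ≤ q.asIdeal ∨
    ∃ (l : ℕ) (η : Ext (ModuleCat.of A (A ⧸ a ^ l)) S.X₁ n),
      (colimitKernel a S.X₁ n l).colon {η} ≤ q.asIdeal := by
  refine or_iff_not_imp_left.2 fun h ↦ ?_
  obtain ⟨s, hs, hsq⟩ := Set.not_subset.1 h
  obtain ⟨l, hl, h0⟩ := Submodule.mem_colon_singleton.1 hs
  rw [← Ext.smul_comp, restrictExt_comp] at h0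
  obtain ⟨η, hη⟩ := Ext.covariant_sequence_exact₂ _ hS _ h0
  refine ⟨l, η, fun r hr ↦ (q.2.mem_or_mem (hξ (?_ : r * s ∈ _))).resolve_right hsq⟩
  have hrη := colon_colimitKernel_le_colon_comp η (Ext.mk₀ S.f) (add_zero n) hr
  rw [hη, Submodule.mem_colon_singleton, ← map_smul, smul_smul] at hrη
  exact Submodule.mem_colon_singleton.2 (mem_colimitKernel_of_restrictExt_mem hl hrη)

lemma isSMulRegular_of_notMem_of_equiv {N : Type u} [AddCommGroup N] [Module A N]
    {P : PrimeSpectrum A} (e : N ≃ₗ[A] A ⧸ P.asIdeal) {r : A} (hr : r ∉ P.asIdeal) :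
    IsSMulRegular N r :=
  (e.isSMulRegular_congr r).2 <| (isSMulRegular_quotient_iff_mem_of_smul_mem _ _).2
    fun _ h ↦ (P.2.mem_or_mem h).resolve_left hr

variable [IsNoetherianRing A]

lemma exists_mem_pow_notMem_annihilator {ξ : Ext (ModuleCat.of A (A ⧸ a ^ k)) N (n + 1)}
    (hξ : (colimitKernel a N (n + 1) k).colon {ξ} ≤ q.asIdeal) :
    ∃ r ∈ a ^ k, r ∉ Module.annihilator A N := by
  refine Set.not_subset.1 fun hle ↦ q.2.ne_top (top_le_iff.1 (le_trans ?_ hξ))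
  have htors : primaryComponent N a = ⊤ := Submodule.eq_top_iff'.2 fun x ↦
    mem_primaryComponent_iff.2 ⟨k, fun r hr ↦ Module.mem_annihilator.1 (hle hr) x⟩
  rw [colimitKernel_eq_top_of_primaryComponent_eq_top htors, Submodule.top_colon]

lemma succ_le_supportDimAt_of_equiv {N : ModuleCat.{u} A} [Module.Finite A N] {P : PrimeSpectrum A}
    (e : N ≃ₗ[A] A ⧸ P.asIdeal)
    (ih : ∀ (N' : Type u) [AddCommGroup N'] [Module A N'] [Module.Finite A N']
      {η : Ext (ModuleCat.of A (A ⧸ a ^ k)) (ModuleCat.of A N') n},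
      (colimitKernel a _ n k).colon {η} ≤ q.asIdeal → n ≤ supportDimAt A N' q)
    {ξ : Ext (ModuleCat.of A (A ⧸ a ^ k)) N (n + 1)}
    (hξ : (colimitKernel a N (n + 1) k).colon {ξ} ≤ q.asIdeal) :
    (n + 1 : ℕ) ≤ supportDimAt A N q := by
  have hann : Module.annihilator A N = P.asIdeal := by
    rw [e.annihilator_eq, Ideal.annihilator_quotient]
  obtain ⟨r, hra, hrP⟩ := exists_mem_pow_notMem_annihilator hξ
  rw [hann] at hrP
  obtain ⟨η, hη⟩ := exists_colon_colimitKernel_quotSMulTop_le hra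
    (isSMulRegular_of_notMem_of_equiv e hrP) ξ
  have hsupp : Module.support A N = PrimeSpectrum.zeroLocus P.asIdeal := by
    rw [Module.support_eq_zeroLocus, hann]
  have hlt : ∀ p ∈ Module.support A (QuotSMulTop r N), P < p := by
    intro p hp
    rw [Module.support_quotSMulTop, hsupp] at hp
    refine lt_of_le_of_ne hp.1 ?_
    rintro rfl
    exact hrP (hp.2 rfl)
  have hP : P ∈ Module.support A N := by rw [hsupp]; exact le_refl P.asIdeal
  calc ((n + 1 : ℕ) : WithBot ℕ∞) = n + 1 := by norm_cast
    _ ≤ supportDimAt A (QuotSMulTop r N) q + 1 := by gcongr; exact ih _ (hη.trans hξ)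
    _ ≤ supportDimAt A N q := supportDimAt_add_one_le
      (mem_support_of_coe_le_supportDimAt (ih _ (hη.trans hξ))) hP hlt

theorem le_supportDimAt_of_colon_colimitKernel_le (N : Type u) [AddCommGroup N] [Module A N]
    [hN : Module.Finite A N] {ξ : Ext (ModuleCat.of A (A ⧸ a ^ k)) (ModuleCat.of A N) n}
    (hξ : (colimitKernel a _ n k).colon {ξ} ≤ q.asIdeal) : n ≤ supportDimAt A N q := by
  induction n generalizing N k with
  | zero => exact supportDimAt_nonneg (mem_support_of_colon_colimitKernel_le hξ)
  | succ n ih =>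
    refine IsNoetherianRing.induction_on_isQuotientEquivQuotientPrime A hN
      (motive := fun N _ _ _ ↦ ∀ {k} {ξ : Ext (ModuleCat.of A (A ⧸ a ^ k)) (ModuleCat.of A N) _},
        (colimitKernel a _ (n + 1) k).colon {ξ} ≤ q.asIdeal → (n + 1 : ℕ) ≤ supportDimAt A N q)
      ?_ ?_ ?_ hξ
    · intro N _ _ _ _ k ξ hξ
      have hq : q ∈ Module.support A N := mem_support_of_colon_colimitKernel_le hξ
      simp [Module.support_eq_empty] at hq
    · intro N _ _ _ P e k ξ hξ
      exact succ_le_supportDimAt_of_equiv e (fun N' _ _ _ _ hη ↦ ih N' hη) hξ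
    · intro N₁ _ _ _ N₂ _ _ _ N₃ _ _ _ f g hf hg hfg ih₁ ih₃ k ξ hξ
      have hS := ModuleCat.shortComplex_shortExact
        (ModuleCat.shortComplexOfCompEqZero f g hfg.linearMap_comp_eq_zero) hfg hf hg
      obtain h | ⟨l, η, hη⟩ := colon_colimitKernel_le_or_exists hS hξ
      · exact (ih₃ h).trans (supportDimAt_mono (Module.support_subset_of_surjective g hg))
      · exact (ih₁ hη).trans (supportDimAt_mono (Module.support_subset_of_injective f hf))

end LocalVanishing

section Monotonicity

open Abelian Ideal IsLocalRing

variable {A : Type u} [CommRing A] [IsNoetherianRing A] [IsLocalRing A] {a b : Ideal A}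
  {N : Type u} [AddCommGroup N] [Module A N] [Module.Finite A N] {k n : ℕ} {y : A}

theorem exists_pow_smul_mem_colimitKernel (hN : Module.supportDim A N ≤ n)
    (hy : y ∈ maximalIdeal A) (ξ : Ext (ModuleCat.of A (A ⧸ a ^ k)) (ModuleCat.of A N) n) :
    ∃ c : ℕ, y ^ c • ξ ∈ colimitKernel a (ModuleCat.of A N) n k := by
  suffices hrad : y ∈ ((colimitKernel a (ModuleCat.of A N) n k).colon {ξ}).radical by
    obtain ⟨c, hc⟩ := hrad
    exact ⟨c, Submodule.mem_colon_singleton.1 hc⟩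
  rw [radical_eq_sInf, mem_sInf]
  rintro q ⟨hξq, hq⟩
  suffices hqm : q = maximalIdeal A from hqm ▸ hy
  by_contra hne
  have hlt : (⟨q, hq⟩ : PrimeSpectrum A) < closedPoint A :=
    lt_of_le_of_ne (le_maximalIdeal hq.ne_top) fun h ↦ hne congr(($h).asIdeal)
  have hdim : (n : WithBot ℕ∞) + 1 ≤ n :=
    calc (n : WithBot ℕ∞) + 1 ≤ supportDimAt A N ⟨q, hq⟩ + 1 := by
          gcongr; exact le_supportDimAt_of_colon_colimitKernel_le N hξq
      _ ≤ Module.supportDim A N := supportDimAt_add_one_le_supportDim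
          (mem_support_of_colon_colimitKernel_le (N := ModuleCat.of A N) hξq) hlt
      _ ≤ n := hN
  exact Nat.not_succ_le_self n (by exact_mod_cast hdim)

lemma subsingleton_localCohomology_of_sup_span_singleton (hN : Module.supportDim A N ≤ n)
    (hy : y ∈ maximalIdeal A)
    (h : Subsingleton ((localCohomology (a ⊔ span {y}) n).obj (ModuleCat.of A N))) :
    Subsingleton ((localCohomology a n).obj (ModuleCat.of A N)) := by
  rw [subsingleton_localCohomology_iff] at h ⊢
  refine fun k ↦ Submodule.eq_top_iff'.2 fun ξ ↦ ?_
  obtain ⟨c, l, hl, hc⟩ := exists_pow_smul_mem_colimitKernel hN hy ξ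
  rw [map_smul] at hc
  obtain ⟨m, ζ, hm, hζ⟩ := exists_restrictExt_eq_of_pow_smul_eq_zero hc
  obtain ⟨j, hj, hζ0⟩ : ζ ∈ colimitKernel _ _ n m := h m ▸ Submodule.mem_top
  have hmj : a ^ (m + j) ≤ a ^ m := pow_le_pow_right (Nat.le_add_right m j)
  have haj : a ^ (m + j) ≤ (a ⊔ span {y}) ^ j :=
    (pow_le_pow_right (Nat.le_add_left j m)).trans (pow_right_mono le_sup_left j)
  refine mem_colimitKernel_of_restrictExt_mem hl
    (mem_colimitKernel_of_restrictExt_mem hm ⟨m + j, hmj, ?_⟩)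
  rw [← hζ, restrictExt_restrictExt, ← restrictExt_restrictExt haj hj, hζ0, map_zero]

theorem subsingleton_localCohomology_of_le (hN : Module.supportDim A N ≤ n) (hab : a ≤ b)
    (hb : b ≠ ⊤) (h : Subsingleton ((localCohomology b n).obj (ModuleCat.of A N))) :
    Subsingleton ((localCohomology a n).obj (ModuleCat.of A N)) := by
  induction a using WellFoundedGT.induction with
  | ind a ih =>
    obtain rfl | hlt := hab.eq_or_lt
    · exact h
    obtain ⟨y, hyb, hya⟩ := Set.exists_of_ssubset hlt
    have hay : a < a ⊔ span {y} := left_lt_sup.2 (by simpa using hya)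
    exact subsingleton_localCohomology_of_sup_span_singleton hN (le_maximalIdeal hb hyb)
      (ih _ hay (sup_le hab ((span_singleton_le_iff_mem _).2 hyb)))

end Monotonicity

section Grade

open Ideal IsLocalRing

variable {A : Type u} [CommRing A] [IsNoetherianRing A] [IsLocalRing A] {a : Ideal A}
  {N : Type u} [AddCommGroup N] [Module A N] [Module.Finite A N] {rs : List A}

lemma length_le_supportDim (hreg : IsRegular N rs) : rs.length ≤ Module.supportDim A N := by
  have := Submodule.Quotient.nontrivial_iff.2 hreg.top_ne_smul.symm
  rw [← Module.supportDim_add_length_eq_supportDim_of_isRegular rs hreg]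
  exact le_add_of_nonneg_left
    (Order.krullDim_nonneg_iff.2 Module.nonempty_support_of_nontrivial.to_subtype)

lemma length_le_gradeM (hreg : IsRegular N rs) (hrs : ∀ r ∈ rs, r ∈ a) :
    rs.length ≤ gradeM a N := by
  refine le_csSup ⟨(LTSeries.longestOf (PrimeSpectrum A)).length, ?_⟩ ⟨rs, rfl, hrs, hreg⟩
  rintro _ ⟨ss, rfl, -, hss⟩
  have hle : (ss.length : WithBot ℕ∞) ≤ (LTSeries.longestOf (PrimeSpectrum A)).length :=
    calc (ss.length : WithBot ℕ∞) ≤ Module.supportDim A N := length_le_supportDim hss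
      _ ≤ ringKrullDim A := Module.supportDim_le_ringKrullDim A N
      _ = _ := Order.krullDim_eq_length_of_finiteDimensionalOrder
  exact_mod_cast hle

lemma exists_associatedPrime_ge (hreg : IsRegular N rs) (ha : a ≠ ⊤) (hIa : ofList rs ≤ a)
    (hg : gradeM a N = rs.length) :
    ∃ p ∈ associatedPrimes A (N ⧸ (ofList rs • (⊤ : Submodule A N))), a ≤ p := by
  refine (subset_union_prime_finite (associatedPrimes.finite A _) ⊥ ⊥
    fun _ hp _ _ ↦ IsAssociatedPrime.isPrime hp).1 ?_
  rw [biUnion_associatedPrimes_eq_compl_regular A]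
  intro y hy hyreg
  have hmem : ∀ r ∈ rs ++ [y], r ∈ a := by
    intro r hr
    obtain hr | hr := List.mem_append.1 hr
    · exact hIa (subset_span hr)
    · rwa [List.mem_singleton.1 hr]
  have hweak : IsWeaklyRegular N (rs ++ [y]) := by
    rw [isWeaklyRegular_append_iff, isWeaklyRegular_singleton_iff]
    exact ⟨hreg.toIsWeaklyRegular, hyreg⟩
  have : Nontrivial N := hreg.nontrivial
  have hreg' : IsRegular N (rs ++ [y]) := .of_isWeaklyRegular_of_mem_maximalIdeal N
    (fun r hr ↦ le_maximalIdeal ha (hmem r hr)) hweak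
  have hlen := length_le_gradeM hreg' hmem
  rw [hg, List.length_append, List.length_singleton] at hlen
  lia

end Grade

theorem stmt16 (rs : List R) (hreg : RingTheory.Sequence.IsRegular M rs) (n : ℕ)
    (hn : ((n : ℕ∞) : WithBot ℕ∞) = ringKrullDim (R ⧸ Module.annihilator R M))
    (hvan : ∀ p ∈ associatedPrimes R (M ⧸ (Ideal.ofList rs • (⊤ : Submodule R M))),
      Subsingleton ↥((localCohomology p n).obj (ModuleCat.of R M)))
    (a : Ideal R) (hIa : Ideal.ofList rs ≤ a) (hg : gradeM a M = rs.length) :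
    Subsingleton ↥((localCohomology a n).obj (ModuleCat.of R M)) := by
  have hdim : Module.supportDim R M ≤ n :=
    (Module.supportDim_eq_ringKrullDim_quotient_annihilator R M).trans_le hn.ge
  obtain rfl | ha := eq_or_ne a ⊤
  · exact subsingleton_localCohomology_top _ n
  · obtain ⟨p, hp, hap⟩ := exists_associatedPrime_ge hreg ha hIa hg
    exact subsingleton_localCohomology_of_le hdim hap
      (IsAssociatedPrime.isPrime hp).ne_top (hvan p hp)
end
end
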